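/- arXiv:2510.25691 — 2 statements merged into one kernel-verified Lean document; each statement's English description precedes it below -/
import Mathlib

section
/- There exists an absolute constant C > 0 such that for every x ≥ 3 and every real-valued multiplicative function f with |f(n)| ≤ 1 for all n and f(n) = 0 whenever n has a prime factor exceeding x^{0.99}, one has |∑_{n ≤ x} f(n)| ≤ C·x·exp(∑_{p ≤ x} f(p)/p), where the sum in the exponential is over primes p ≤ x. -/
open Finset

/-
Write `f = (f * 1) * μ`, so that `∑_{n ≤ N} f n = ∑_{d ≤ N} (f * 1)(d) M(N / d)` with `M` the
Mertens function. Since `M(N) ≪ N / (1 + log N) ^ 2`, the value `|M(N)|` is at most a constant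
times `∑_{k ≤ N} v k` with `v k = 1 / (1 + log k) ^ 2`, and it remains to bound the summatory
function of `H * v`, where `H = |f * 1|` is multiplicative with `H (p ^ k) ≤ k + 1`. Then
`H log ≤ c * H` for a function `c` supported on prime powers with `∑_{n ≤ N} c n ≪ N`, so
multiplying by `log N` gives
`log N ∑_{n ≤ N} (H * v) n ≪ N ∑_{d ≤ N} H d / d ≪ N exp (∑_{p ≤ N} |1 + f p| / p)`, and Mertens'
estimate `exp (∑_{p ≤ N} 1 / p) ≪ log N` cancels the logarithm.

The bound for `M` comes from the line `re s = 1`: the series `∑ μ n (log n) ^ 4 n ^ (-s)` is the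
fourth derivative of `1 / ζ`, which is `O(|t| ^ θ)` with `θ < 1`, so Perron's formula with the
kernel `max (1 - t) 0`, whose Mellin transform is `1 / (s (s + 1))`, bounds its Cesàro sums by
`O(x)`. In removing the Cesàro weight two of the four logarithms are lost, and partial summation
turns the other two into the saving `(log N) ^ 2`.
-/

/-- The `n`-th term of the series expressing `(s - 1) ζ(s)` on `0 < re s`: `s - 1` times the
difference between `(n + 1)⁻ˢ` and the integral of `y⁻ˢ` over `[n + 1, n + 2]`. -/
noncomputable def zetaTerm (n : ℕ) (s : ℂ) : ℂ :=
  (s - 1) * (n + 1 : ℂ) ^ (-s) + ((n + 1 : ℂ) + 1) ^ (1 - s) - (n + 1 : ℂ) ^ (1 - s)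

section ZetaSeries

variable {a x θ : ℝ} {s : ℂ}

lemma norm_ofReal_cpow_neg_le (ha : 0 < a) (hs : 0 ≤ s.re) (hx : a ≤ x) :
    ‖(x : ℂ) ^ (-s)‖ ≤ a ^ (-s.re) := by
  rw [Complex.norm_cpow_eq_rpow_re_of_pos (ha.trans_le hx)]
  exact Real.rpow_le_rpow_of_nonpos ha hx (by simpa using hs)

lemma norm_cpow_neg_sub_cpow_neg_le (ha : 0 < a) (hs : 0 < s.re) (hx : x ∈ Set.Icc a (a + 1)) :
    ‖(x : ℂ) ^ (-s) - (a : ℂ) ^ (-s)‖ ≤ ‖s‖ / a * a ^ (-s.re) := by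
  have hs0 : -s ≠ 0 := neg_ne_zero.2 (by rintro rfl; simp at hs)
  have hderiv_le : ∀ y ∈ Set.Icc a (a + 1), ‖-s * (y : ℂ) ^ (-s - 1)‖ ≤ ‖s‖ / a * a ^ (-s.re) := by
    intro y hy
    have hy' : ‖(y : ℂ) ^ (-s - 1)‖ ≤ a ^ (-(s.re + 1)) := by
      simpa [neg_add, sub_eq_add_neg, add_comm] using
        norm_ofReal_cpow_neg_le (s := s + 1) ha (by simp; linarith) hy.1
    calc ‖-s * (y : ℂ) ^ (-s - 1)‖ ≤ ‖s‖ * a ^ (-(s.re + 1)) := by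
          rw [norm_mul, norm_neg]; gcongr
      _ = ‖s‖ / a * a ^ (-s.re) := by rw [neg_add', Real.rpow_sub_one ha.ne']; ring
  have hmvt := (convex_Icc a (a + 1)).norm_image_sub_le_of_norm_hasDerivWithin_le
    (fun y hy ↦ (hasDerivAt_ofReal_cpow_const (ha.trans_le hy.1).ne' hs0).hasDerivWithinAt)
    hderiv_le (Set.left_mem_Icc.2 (by linarith)) hx
  have hxa : ‖x - a‖ ≤ 1 := by rw [Real.norm_of_nonneg (by linarith [hx.1])]; linarith [hx.2]
  exact hmvt.trans (mul_le_of_le_one_right (by positivity) hxa)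

/- The mean value bound is good for `‖s‖ ≤ a` and the trivial bound for `‖s‖ ≥ a`; the exponent `θ`
interpolates between the two. -/
lemma norm_cpow_neg_sub_cpow_neg_le_rpow (ha : 0 < a) (hs : 0 < s.re) (hθ0 : 0 ≤ θ) (hθ1 : θ ≤ 1)
    (hx : x ∈ Set.Icc a (a + 1)) :
    ‖(x : ℂ) ^ (-s) - (a : ℂ) ^ (-s)‖ ≤ 2 * ‖s‖ ^ θ * a ^ (-(s.re + θ)) := by
  have hscale : ‖s‖ ^ θ * a ^ (-(s.re + θ)) = (‖s‖ / a) ^ θ * a ^ (-s.re) := by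
    rw [Real.div_rpow (norm_nonneg s) ha.le, neg_add, Real.rpow_add ha, Real.rpow_neg ha.le θ]
    field_simp
  suffices h : ‖(x : ℂ) ^ (-s) - (a : ℂ) ^ (-s)‖ ≤ 2 * ((‖s‖ / a) ^ θ * a ^ (-s.re)) by
    rwa [mul_assoc, hscale]
  rcases le_total 1 (‖s‖ / a) with h | h
  · calc ‖(x : ℂ) ^ (-s) - (a : ℂ) ^ (-s)‖ ≤ ‖(x : ℂ) ^ (-s)‖ + ‖(a : ℂ) ^ (-s)‖ := norm_sub_le _ _
      _ ≤ a ^ (-s.re) + a ^ (-s.re) :=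
        add_le_add (norm_ofReal_cpow_neg_le ha hs.le hx.1) (norm_ofReal_cpow_neg_le ha hs.le le_rfl)
      _ = 2 * (1 * a ^ (-s.re)) := by ring
      _ ≤ 2 * ((‖s‖ / a) ^ θ * a ^ (-s.re)) := by gcongr; exact Real.one_le_rpow h hθ0
  · calc ‖(x : ℂ) ^ (-s) - (a : ℂ) ^ (-s)‖ ≤ ‖s‖ / a * a ^ (-s.re) :=
        norm_cpow_neg_sub_cpow_neg_le ha hs hx
      _ ≤ (‖s‖ / a) ^ θ * a ^ (-s.re) := by
        gcongr; exact Real.self_le_rpow_of_le_one (by positivity) h hθ1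
      _ ≤ 2 * ((‖s‖ / a) ^ θ * a ^ (-s.re)) := le_mul_of_one_le_left (by positivity) one_le_two

lemma hasDerivAt_ofReal_cpow_one_sub (hx : x ≠ 0) :
    HasDerivAt (fun y : ℝ ↦ (y : ℂ) ^ (1 - s)) ((1 - s) * (x : ℂ) ^ (-s)) x := by
  by_cases h : s = 1
  · simpa [h] using hasDerivAt_const x (1 : ℂ)
  · simpa using hasDerivAt_ofReal_cpow_const hx (sub_ne_zero.2 (Ne.symm h))

lemma norm_zetaTerm_le (n : ℕ) (hs : 0 < s.re) (hθ0 : 0 ≤ θ) (hθ1 : θ ≤ 1) :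
    ‖zetaTerm n s‖ ≤ 2 * ‖s - 1‖ * ‖s‖ ^ θ * (n + 1 : ℝ) ^ (-(s.re + θ)) := by
  set b : ℝ := n + 1 with hb
  have hb0 : 0 < b := by positivity
  have hderiv : ∀ y ∈ Set.Icc b (b + 1),
      HasDerivWithinAt (fun y : ℝ ↦ (s - 1) * (b : ℂ) ^ (-s) * y + (y : ℂ) ^ (1 - s))
        (-(s - 1) * ((y : ℂ) ^ (-s) - (b : ℂ) ^ (-s))) (Set.Icc b (b + 1)) y := by
    intro y hy
    have hlin := (Complex.ofRealCLM.hasDerivAt (x := y)).const_mul ((s - 1) * (b : ℂ) ^ (-s))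
    refine ((hlin.add (hasDerivAt_ofReal_cpow_one_sub
      (hb0.trans_le hy.1).ne')).congr_deriv ?_).hasDerivWithinAt
    simp only [Complex.ofRealCLM_apply, Complex.ofReal_one]
    ring
  have hmvt := (convex_Icc b (b + 1)).norm_image_sub_le_of_norm_hasDerivWithin_le
    (C := ‖s - 1‖ * (2 * ‖s‖ ^ θ * b ^ (-(s.re + θ)))) hderiv
    (fun y hy ↦ by
      rw [norm_mul, norm_neg]
      gcongr
      exact norm_cpow_neg_sub_cpow_neg_le_rpow hb0 hs hθ0 hθ1 hy)
    (Set.left_mem_Icc.2 (by linarith)) (Set.right_mem_Icc.2 (by linarith))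
  calc ‖zetaTerm n s‖ = ‖(s - 1) * (b : ℂ) ^ (-s) * (b + 1 : ℝ) + ((b + 1 : ℝ) : ℂ) ^ (1 - s)
        - ((s - 1) * (b : ℂ) ^ (-s) * b + (b : ℂ) ^ (1 - s))‖ := by
        rw [zetaTerm, hb]
        push_cast
        ring_nf
    _ ≤ ‖s - 1‖ * (2 * ‖s‖ ^ θ * b ^ (-(s.re + θ))) * ‖b + 1 - b‖ := hmvt
    _ = 2 * ‖s - 1‖ * ‖s‖ ^ θ * b ^ (-(s.re + θ)) := by simp; ring

lemma summable_natCast_add_one_rpow_neg {r : ℝ} (hr : 1 < r) :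
    Summable fun n : ℕ ↦ (n + 1 : ℝ) ^ (-r) := by
  simpa using (summable_nat_add_iff 1).2 (Real.summable_nat_rpow.2 (neg_lt_neg hr))

lemma norm_zetaTerm_le_of_le_re {σ : ℝ} (n : ℕ) (hσ : 0 < σ) (hs : σ ≤ s.re) (hθ0 : 0 ≤ θ)
    (hθ1 : θ ≤ 1) :
    ‖zetaTerm n s‖ ≤ 2 * ‖s - 1‖ * ‖s‖ ^ θ * (n + 1 : ℝ) ^ (-(σ + θ)) := by
  refine (norm_zetaTerm_le n (hσ.trans_le hs) hθ0 hθ1).trans ?_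
  gcongr
  linarith [n.cast_nonneg (α := ℝ)]

lemma sum_range_zetaTerm (N : ℕ) (s : ℂ) :
    ∑ n ∈ range N, zetaTerm n s =
      (s - 1) * ∑ n ∈ range N, (n + 1 : ℂ) ^ (-s) + (((N : ℂ) + 1) ^ (1 - s) - 1) := by
  have htel := Finset.sum_range_sub (fun n : ℕ ↦ ((n : ℂ) + 1) ^ (1 - s)) N
  simp only [Nat.cast_add, Nat.cast_one, Nat.cast_zero, zero_add, Complex.one_cpow] at htel
  rw [← htel, Finset.mul_sum, ← Finset.sum_add_distrib]
  exact Finset.sum_congr rfl fun n _ ↦ by rw [zetaTerm]; ring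

lemma tendsto_sum_range_zetaTerm (hs : 1 < s.re) :
    Filter.Tendsto (fun N ↦ ∑ n ∈ range N, zetaTerm n s) Filter.atTop
      (nhds (riemannZeta₁ s - 1)) := by
  have hs1 : s ≠ 1 := by rintro rfl; simp at hs
  have hζ : Filter.Tendsto (fun N ↦ ∑ n ∈ range N, (n + 1 : ℂ) ^ (-s)) Filter.atTop
      (nhds (riemannZeta s)) := by
    have hsum : Summable fun n : ℕ ↦ 1 / (n + 1 : ℂ) ^ s := by
      simpa using (summable_nat_add_iff 1).2 (Complex.summable_one_div_nat_cpow.2 hs)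
    simp_rw [zeta_eq_tsum_one_div_nat_add_one_cpow hs, Complex.cpow_neg, ← one_div]
    exact hsum.hasSum.tendsto_sum_nat
  have htail : Filter.Tendsto (fun N : ℕ ↦ ((N : ℂ) + 1) ^ (1 - s)) Filter.atTop (nhds 0) := by
    rw [tendsto_zero_iff_norm_tendsto_zero]
    refine ((tendsto_rpow_neg_atTop (by linarith : 0 < s.re - 1)).comp
      (tendsto_natCast_atTop_atTop.comp (Filter.tendsto_add_atTop_nat 1))).congr fun N ↦ ?_
    simpa using (Complex.norm_natCast_cpow_of_pos N.succ_pos (1 - s)).symm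
  have hζ₁ : (s - 1) * riemannZeta s = riemannZeta₁ s := by
    rw [riemannZeta_eq_inv_sub_mul hs1, mul_inv_cancel_left₀ (sub_ne_zero.2 hs1)]
  simpa only [sum_range_zetaTerm, hζ₁, zero_sub, ← sub_eq_add_neg] using
    (hζ.const_mul (s - 1)).add (htail.sub_const 1)

lemma summable_zetaTerm (hs : 0 < s.re) : Summable fun n ↦ zetaTerm n s :=
  .of_norm_bounded ((summable_natCast_add_one_rpow_neg (by linarith)).mul_left _)
    fun n ↦ norm_zetaTerm_le n hs zero_le_one le_rfl

lemma tsum_zetaTerm_of_one_lt_re (hs : 1 < s.re) :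
    ∑' n, zetaTerm n s = riemannZeta₁ s - 1 :=
  tendsto_nhds_unique (summable_zetaTerm (by linarith)).hasSum.tendsto_sum_nat
    (tendsto_sum_range_zetaTerm hs)

lemma differentiable_zetaTerm (n : ℕ) : Differentiable ℂ (zetaTerm n) := by
  have h1 : (n + 1 : ℂ) ≠ 0 := n.cast_add_one_ne_zero
  have h2 : (n + 1 : ℂ) + 1 ≠ 0 := by simpa using (n + 1).cast_add_one_ne_zero (R := ℂ)
  unfold zetaTerm
  intro z
  refine ((DifferentiableAt.mul (by fun_prop) ?_).add ?_).sub ?_ <;>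
  exact DifferentiableAt.const_cpow (by fun_prop) (by simp [h1, h2])

lemma differentiableOn_tsum_zetaTerm :
    DifferentiableOn ℂ (fun z ↦ ∑' n, zetaTerm n z) {z | 0 < z.re} := by
  intro s hs
  set σ : ℝ := s.re / 2
  set R : ℝ := ‖s‖ + 1
  have hσ : 0 < σ := half_pos hs
  have hopen : IsOpen ({z : ℂ | σ < z.re} ∩ Metric.ball 0 R) :=
    (isOpen_lt continuous_const Complex.continuous_re).inter Metric.isOpen_ball
  have hmem : s ∈ {z : ℂ | σ < z.re} ∩ Metric.ball 0 R :=
    ⟨half_lt_self (a := s.re) hs, by simp [R]⟩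
  refine ((Complex.differentiableOn_tsum_of_summable_norm
    (u := fun n : ℕ ↦ 2 * (R + 1) * R ^ (1 : ℝ) * (n + 1 : ℝ) ^ (-(σ + 1)))
    ((summable_natCast_add_one_rpow_neg (by linarith)).mul_left _)
    (fun n ↦ (differentiable_zetaTerm n).differentiableOn) hopen
    fun n z hz ↦ ?_).differentiableAt (hopen.mem_nhds hmem)).differentiableWithinAt
  have hzR : ‖z‖ ≤ R := by simpa using (Metric.mem_ball.1 hz.2).le
  have hz1 : ‖z - 1‖ ≤ R + 1 := (norm_sub_le _ _).trans (by simpa using hzR)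
  refine (norm_zetaTerm_le_of_le_re n hσ hz.1.le zero_le_one le_rfl).trans ?_
  gcongr

lemma riemannZeta₁_eq_one_add_tsum_zetaTerm (hs : 0 < s.re) :
    riemannZeta₁ s = 1 + ∑' n, zetaTerm n s := by
  have hopen : IsOpen {z : ℂ | 0 < z.re} := isOpen_lt continuous_const Complex.continuous_re
  have hseries : AnalyticOnNhd ℂ (fun z ↦ 1 + ∑' n, zetaTerm n z) {z | 0 < z.re} :=
    (differentiableOn_tsum_zetaTerm.const_add 1).analyticOnNhd hopen
  have hζ₁ : AnalyticOnNhd ℂ riemannZeta₁ {z | 0 < z.re} :=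
    differentiable_riemannZeta₁.differentiableOn.analyticOnNhd hopen
  have hmem : {z : ℂ | 1 < z.re} ∈ nhds (2 : ℂ) :=
    (isOpen_lt continuous_const Complex.continuous_re).mem_nhds (by simp)
  refine hζ₁.eqOn_of_preconnected_of_eventuallyEq hseries
    (convex_halfSpace_re_gt 0).isPreconnected (show (2 : ℂ) ∈ _ by simp) ?_ hs
  filter_upwards [hmem] with z hz
  rw [tsum_zetaTerm_of_one_lt_re hz, add_sub_cancel]

lemma exists_norm_riemannZeta₁_le {σ : ℝ} (hσ : 0 < σ) (hθ0 : 0 ≤ θ) (hθ1 : θ ≤ 1)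
    (hσθ : 1 < σ + θ) :
    ∃ K, 0 ≤ K ∧ ∀ s : ℂ, σ ≤ s.re → ‖riemannZeta₁ s‖ ≤ 1 + K * ‖s - 1‖ * ‖s‖ ^ θ := by
  have hsum := summable_natCast_add_one_rpow_neg hσθ
  refine ⟨2 * ∑' n : ℕ, (n + 1 : ℝ) ^ (-(σ + θ)), by positivity, fun s hs ↦ ?_⟩
  rw [riemannZeta₁_eq_one_add_tsum_zetaTerm (hσ.trans_le hs)]
  refine (norm_add_le _ _).trans ?_
  rw [norm_one]
  gcongr
  refine (tsum_of_norm_bounded (hsum.mul_left _).hasSum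
    fun n ↦ norm_zetaTerm_le_of_le_re n hσ hs hθ0 hθ1).trans_eq ?_
  rw [tsum_mul_left]
  ring

end ZetaSeries

section ZetaBounds

variable {ε : ℝ} {s : ℂ}

lemma const_mul_rpow_le {c t ε : ℝ} (hc : 1 ≤ c) (ht : 0 ≤ t) (hε : ε ≤ 1) :
    (c * t) ^ ε ≤ c * t ^ ε := by
  rw [Real.mul_rpow (by linarith) ht]
  gcongr
  exact Real.rpow_le_self_of_one_le hc hε

lemma ne_one_of_im_ne_zero (h : s.im ≠ 0) : s ≠ 1 := by
  rintro rfl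
  simp at h

lemma norm_riemannZeta_eq_div (hs : s ≠ 1) : ‖riemannZeta s‖ = ‖riemannZeta₁ s‖ / ‖s - 1‖ := by
  rw [riemannZeta_eq_inv_sub_mul hs, norm_mul, norm_inv, inv_mul_eq_div]

lemma exists_norm_riemannZeta_le_rpow (hε0 : 0 < ε) (hε1 : ε ≤ 1) :
    ∃ C, 1 ≤ C ∧ ∀ s : ℂ, 1 - ε / 2 ≤ s.re → s.re ≤ 4 → 1 / 2 ≤ |s.im| →
      ‖riemannZeta s‖ ≤ C * |s.im| ^ ε := by
  obtain ⟨K, hK, hζ₁⟩ := exists_norm_riemannZeta₁_le (σ := 1 - ε / 2) (by linarith) hε0.le hε1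
    (by linarith)
  refine ⟨4 + 9 * K, by linarith, fun s hs hs4 ht ↦ ?_⟩
  have hs1 : s ≠ 1 := ne_one_of_im_ne_zero (abs_pos.1 (by linarith))
  have hdist : 1 / 2 ≤ ‖s - 1‖ := ht.trans (by simpa using Complex.abs_im_le_norm (s - 1))
  have hpos : 0 < ‖s - 1‖ := by linarith
  have hnorm : ‖s‖ ≤ 9 * |s.im| := by
    have hre : |s.re| ≤ 4 := abs_le.2 ⟨by linarith, hs4⟩
    linarith [Complex.norm_le_abs_re_add_abs_im s]
  have hnorm_rpow : ‖s‖ ^ ε ≤ 9 * |s.im| ^ ε :=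
    (Real.rpow_le_rpow (norm_nonneg s) hnorm hε0.le).trans
      (const_mul_rpow_le (by norm_num) (abs_nonneg _) hε1)
  have him_rpow : 1 / 2 ≤ |s.im| ^ ε :=
    (Real.self_le_rpow_of_le_one (by norm_num) (by norm_num) hε1).trans
      (Real.rpow_le_rpow (by norm_num) ht hε0.le)
  calc ‖riemannZeta s‖ ≤ (1 + K * ‖s - 1‖ * ‖s‖ ^ ε) / ‖s - 1‖ := by
        rw [norm_riemannZeta_eq_div hs1]; gcongr; exact hζ₁ s hs
    _ = ‖s - 1‖⁻¹ + K * ‖s‖ ^ ε := by field_simp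
    _ ≤ 2 + K * (9 * |s.im| ^ ε) := by
        gcongr
        exact (inv_le_comm₀ hpos two_pos).2 (by linarith)
    _ ≤ (4 + 9 * K) * |s.im| ^ ε := by linarith

lemma abs_im_mem_Icc_of_norm_sub_le {z : ℂ} (hs : 1 ≤ |s.im|) (hz : ‖z - s‖ ≤ 1 / 2) :
    |z.im| ∈ Set.Icc (|s.im| / 2) (2 * |s.im|) := by
  have him : |z.im - s.im| ≤ 1 / 2 := (Complex.abs_im_le_norm (z - s)).trans hz
  have h1 := abs_sub_abs_le_abs_sub z.im s.im
  have h2 := abs_sub_abs_le_abs_sub s.im z.im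
  rw [abs_sub_comm] at h2
  constructor <;> linarith

lemma abs_re_sub_le_of_norm_sub_le {z : ℂ} {r : ℝ} (hz : ‖z - s‖ ≤ r) :
    s.re - r ≤ z.re ∧ z.re ≤ s.re + r := by
  have := abs_le.1 ((Complex.abs_re_le_norm (z - s)).trans hz)
  simp only [Complex.sub_re] at this
  constructor <;> linarith

lemma exists_norm_deriv_riemannZeta_le_rpow (hε0 : 0 < ε) (hε1 : ε ≤ 1) :
    ∃ C, 1 ≤ C ∧ ∀ s : ℂ, 1 - ε / 4 ≤ s.re → s.re ≤ 3 → 1 ≤ |s.im| →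
      ‖deriv riemannZeta s‖ ≤ C * |s.im| ^ ε := by
  obtain ⟨C, hC, hζ⟩ := exists_norm_riemannZeta_le_rpow hε0 hε1
  refine ⟨8 * C / ε, by rw [le_div_iff₀ hε0]; linarith, fun s hs hs3 ht ↦ ?_⟩
  have hdiff : DiffContOnCl ℂ riemannZeta (Metric.ball s (ε / 4)) := by
    refine DifferentiableOn.diffContOnCl fun z hz ↦
      (differentiableAt_riemannZeta (ne_one_of_im_ne_zero ?_)).differentiableWithinAt
    rw [closure_ball _ (by positivity), Metric.mem_closedBall, dist_eq_norm] at hz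
    exact abs_pos.1 ((half_pos (by linarith)).trans_le
      (abs_im_mem_Icc_of_norm_sub_le ht (hz.trans (by linarith))).1)
  refine (Complex.norm_deriv_le_of_forall_mem_sphere_norm_le (C := C * (2 * |s.im| ^ ε))
    (by positivity) hdiff fun z hz ↦ ?_).trans_eq (by field_simp; ring)
  have hz' : ‖z - s‖ ≤ ε / 4 := by simpa [dist_eq_norm] using hz.le
  have him := abs_im_mem_Icc_of_norm_sub_le ht (hz'.trans (by linarith))
  have hre := abs_re_sub_le_of_norm_sub_le hz'
  refine (hζ z (by linarith) (by linarith) (by linarith [him.1])).trans ?_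
  gcongr
  exact (Real.rpow_le_rpow (abs_nonneg _) him.2 hε0.le).trans
    (const_mul_rpow_le one_le_two (abs_nonneg _) hε1)

lemma exists_norm_riemannZeta_one_add_le :
    ∃ C, 1 ≤ C ∧ ∀ η : ℝ, 0 < η → η ≤ 2 → ‖riemannZeta (1 + η)‖ ≤ C / η := by
  obtain ⟨C, hC⟩ := isCompact_Icc.exists_bound_of_continuousOn (s := Set.Icc (0 : ℝ) 2)
    (f := fun η : ℝ ↦ riemannZeta₁ (1 + η))
    (differentiable_riemannZeta₁.continuous.comp (by fun_prop)).continuousOn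
  refine ⟨max 1 C, le_max_left _ _, fun η hη hη2 ↦ ?_⟩
  have h1 : (1 + η : ℂ) ≠ 1 := by simpa using hη.ne'
  rw [norm_riemannZeta_eq_div h1, add_sub_cancel_left, Complex.norm_of_nonneg hη.le]
  gcongr
  exact (hC η ⟨hη.le, hη2⟩).trans (le_max_right _ _)

lemma one_le_norm_riemannZeta_three_four_one {η : ℝ} (hη : 0 < η) (t : ℝ) :
    1 ≤ ‖riemannZeta (1 + η)‖ ^ 3 * ‖riemannZeta (1 + η + Complex.I * t)‖ ^ 4 *
      ‖riemannZeta (1 + η + 2 * Complex.I * t)‖ := by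
  have h := DirichletCharacter.norm_LFunction_product_ge_one (1 : DirichletCharacter ℂ 1) hη t
  rw [DirichletCharacter.LFunctionTrivChar, DirichletCharacter.LFunction_modOne_eq,
    DirichletCharacter.LFunction_modOne_eq] at h
  simpa only [norm_mul, norm_pow] using h

lemma exists_re_sub_one_pow_three_le (hε0 : 0 < ε) (hε1 : ε ≤ 1) :
    ∃ B, 1 ≤ B ∧ ∀ s : ℂ, 1 ≤ |s.im| → 1 < s.re → s.re ≤ 3 →
      (s.re - 1) ^ 3 ≤ B * |s.im| ^ ε * ‖riemannZeta s‖ ^ 4 := by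
  obtain ⟨C, hC, hζ⟩ := exists_norm_riemannZeta_le_rpow hε0 hε1
  obtain ⟨D, hD, hpole⟩ := exists_norm_riemannZeta_one_add_le
  have hD3 : 1 ≤ D ^ 3 := one_le_pow₀ hD
  refine ⟨2 * C * D ^ 3, by nlinarith, fun s ht hs hs3 ↦ ?_⟩
  set η : ℝ := s.re - 1
  have hη : 0 < η := sub_pos.2 hs
  have hs_eq : (1 + η + Complex.I * s.im : ℂ) = s := by apply Complex.ext <;> simp [η]
  have h2t : ‖riemannZeta (1 + η + 2 * Complex.I * s.im)‖ ≤ C * (2 * |s.im| ^ ε) := by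
    have h := hζ (1 + η + 2 * Complex.I * s.im) (by simp; linarith) (by simp [η]; linarith)
      (by simp [abs_mul]; linarith)
    have him : |(1 + η + 2 * Complex.I * s.im : ℂ).im| = 2 * |s.im| := by simp [abs_mul]
    rw [him] at h
    refine h.trans ?_
    gcongr
    exact const_mul_rpow_le one_le_two (abs_nonneg _) hε1
  have h341 := one_le_norm_riemannZeta_three_four_one hη s.im
  rw [hs_eq] at h341
  have hprod : 1 ≤ (D / η) ^ 3 * ‖riemannZeta s‖ ^ 4 * (C * (2 * |s.im| ^ ε)) := by
    refine h341.trans ?_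
    gcongr
    exact hpole η hη (by linarith)
  calc η ^ 3 ≤ η ^ 3 * ((D / η) ^ 3 * ‖riemannZeta s‖ ^ 4 * (C * (2 * |s.im| ^ ε))) :=
        le_mul_of_one_le_right (by positivity) hprod
    _ = 2 * C * D ^ 3 * |s.im| ^ ε * ‖riemannZeta s‖ ^ 4 := by field_simp

lemma div_pow_seven_le_of_pow_three_le {a B T η z : ℝ} (ha : 0 < a) (hB : 1 ≤ B) (hT : 1 ≤ T)
    (hz : 0 ≤ z) (hη : a ^ 4 / T ^ 8 ≤ η) (h : η ^ 3 ≤ B * T * z ^ 4) : a ^ 3 / B / T ^ 7 ≤ z := by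
  refine le_of_pow_le_pow_left₀ four_ne_zero hz ?_
  calc (a ^ 3 / B / T ^ 7) ^ 4 = a ^ 12 / (B ^ 4 * T ^ 28) := by field_simp
    _ ≤ a ^ 12 / (B * T ^ 25) := by
        gcongr
        · exact le_self_pow₀ hB four_ne_zero
        · norm_num
    _ = (a ^ 4 / T ^ 8) ^ 3 / (B * T) := by field_simp
    _ ≤ η ^ 3 / (B * T) := by gcongr
    _ ≤ z ^ 4 := by rw [div_le_iff₀ (by positivity)]; linarith

lemma pow_four_div_pow_seven_le {a B C T : ℝ} (ha : 0 ≤ a) (hB : 0 < B) (hC : 1 ≤ C)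
    (hT : 0 < T) (h : 4 * B * C * a ≤ 1) :
    a ^ 4 / T ^ 7 ≤ a ^ 3 / B / T ^ 7 - C * T * (2 * (a ^ 4 / T ^ 8)) := by
  have haB : a * B * (1 + 2 * C) ≤ 1 := by
    nlinarith [mul_le_mul_of_nonneg_left hC (mul_nonneg ha hB.le)]
  have hcoeff : a ^ 4 + 2 * C * a ^ 4 ≤ a ^ 3 / B := by
    rw [le_div_iff₀ hB]
    calc (a ^ 4 + 2 * C * a ^ 4) * B = a ^ 3 * (a * B * (1 + 2 * C)) := by ring
      _ ≤ a ^ 3 := mul_le_of_le_one_right (by positivity) haB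
  calc a ^ 4 / T ^ 7 ≤ (a ^ 3 / B - 2 * C * a ^ 4) / T ^ 7 := by gcongr; linarith
    _ = a ^ 3 / B / T ^ 7 - C * T * (2 * (a ^ 4 / T ^ 8)) := by field_simp

lemma exists_norm_riemannZeta_sub_le (hε0 : 0 < ε) (hε1 : ε ≤ 1) :
    ∃ C, 1 ≤ C ∧ ∀ s w : ℂ, s.im = w.im → 1 ≤ |s.im| → s.re ∈ Set.Icc (1 - ε / 4) 3 →
      w.re ∈ Set.Icc (1 - ε / 4) 3 →
      ‖riemannZeta s - riemannZeta w‖ ≤ C * |s.im| ^ ε * ‖s - w‖ := by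
  obtain ⟨C, hC, hderiv⟩ := exists_norm_deriv_riemannZeta_le_rpow hε0 hε1
  refine ⟨C, hC, fun s w him ht hs hw ↦ ?_⟩
  refine Convex.norm_image_sub_le_of_norm_deriv_le (𝕜 := ℂ)
    (s := Set.Icc (1 - ε / 4) 3 ×ℂ {s.im}) (fun z hz ↦ ?_) (fun z hz ↦ ?_)
    (((convex_Icc _ _).linear_preimage Complex.reLm).inter
      ((convex_singleton _).linear_preimage Complex.imLm)) ⟨hw, him.symm⟩ ⟨hs, rfl⟩
  · have hz_im : z.im = s.im := hz.2
    exact differentiableAt_riemannZeta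
      (ne_one_of_im_ne_zero (abs_pos.1 (by rw [hz_im]; linarith)))
  · have hz_im : z.im = s.im := hz.2
    have h := hderiv z hz.1.1 hz.1.2 (by rwa [hz_im])
    rwa [hz_im] at h

/- Just to the right of the line `re s = 1` the lower bound is the 3-4-1 inequality; the bound on
`ζ'` carries it across the line. -/
lemma exists_le_norm_riemannZeta (hε0 : 0 < ε) (hε1 : ε ≤ 1) :
    ∃ c, 0 < c ∧ c ≤ ε / 4 ∧ ∀ s : ℂ, 1 ≤ |s.im| → 1 - c / (|s.im| ^ ε) ^ 8 ≤ s.re → s.re ≤ 3 →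
      c / (|s.im| ^ ε) ^ 7 ≤ ‖riemannZeta s‖ := by
  obtain ⟨B, hB, h341⟩ := exists_re_sub_one_pow_three_le hε0 hε1
  obtain ⟨C, hC, hlip⟩ := exists_norm_riemannZeta_sub_le hε0 hε1
  set a : ℝ := ε / (4 * B * C)
  have ha0 : 0 < a := by positivity
  have ha_mul : 4 * B * C * a = ε := by simp only [a]; field_simp
  have hBC : 1 ≤ B * C := one_le_mul_of_one_le_of_one_le hB hC
  have ha1 : a ≤ ε / 4 := by nlinarith
  have ha4 : a ^ 4 ≤ ε / 4 := (pow_le_of_le_one ha0.le (by linarith) four_ne_zero).trans ha1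
  refine ⟨a ^ 4, by positivity, ha4, fun s ht hs hs3 ↦ ?_⟩
  set T : ℝ := |s.im| ^ ε
  have hT : 1 ≤ T := Real.one_le_rpow ht hε0.le
  have hδ0 : 0 < a ^ 4 / T ^ 8 := by positivity
  have hδ : a ^ 4 / T ^ 8 ≤ ε / 4 := (div_le_self (by positivity) (one_le_pow₀ hT)).trans ha4
  have hright : ∀ w : ℂ, w.im = s.im → w.re ≤ 3 → 1 + a ^ 4 / T ^ 8 ≤ w.re →
      a ^ 3 / B / T ^ 7 ≤ ‖riemannZeta w‖ := fun w him hw3 hw ↦ by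
    have h := h341 w (by rwa [him]) (by linarith) hw3
    rw [him] at h
    exact div_pow_seven_le_of_pow_three_le ha0 hB hT (norm_nonneg _) (by linarith) h
  have hgap : a ^ 4 / T ^ 7 ≤ a ^ 3 / B / T ^ 7 - C * T * (2 * (a ^ 4 / T ^ 8)) :=
    pow_four_div_pow_seven_le ha0.le (by linarith) hC (by linarith) (by linarith)
  rcases le_total (1 + a ^ 4 / T ^ 8) s.re with hcase | hcase
  · have hgap0 : 0 ≤ C * T * (2 * (a ^ 4 / T ^ 8)) := by positivity
    linarith [hright s rfl hs3 hcase]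
  · set w : ℂ := ⟨1 + a ^ 4 / T ^ 8, s.im⟩
    have hsw : ‖s - w‖ ≤ 2 * (a ^ 4 / T ^ 8) := by
      refine (Complex.norm_le_abs_re_add_abs_im _).trans ?_
      simp only [w, Complex.sub_re, Complex.sub_im, sub_self, abs_zero, add_zero]
      exact abs_le.2 ⟨by linarith, by linarith⟩
    have hdiff : ‖riemannZeta s - riemannZeta w‖ ≤ C * T * (2 * (a ^ 4 / T ^ 8)) := by
      refine (hlip s w rfl ht ⟨by linarith, hs3⟩ ⟨?_, ?_⟩).trans (by gcongr) <;>
      simp only [w] <;> linarith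
    have hw := hright w rfl (by simp only [w]; linarith) le_rfl
    linarith [norm_le_norm_add_norm_sub (riemannZeta s) (riemannZeta w)]

end ZetaBounds

/-- The holomorphic function `1 / ζ` on a neighbourhood of `1 ≤ re s`. It is written with
`riemannZeta₁` because `riemannZeta 1` is a junk value, whereas `1 / ζ` vanishes at `s = 1`. -/
noncomputable def invZeta (s : ℂ) : ℂ := (s - 1) / riemannZeta₁ s

section InvZeta

open scoped ArithmeticFunction.Moebius LSeries.notation

variable {ε : ℝ} {s : ℂ}

lemma invZeta_eq_inv (hs : s ≠ 1) : invZeta s = (riemannZeta s)⁻¹ := by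
  rw [riemannZeta_eq_inv_sub_mul hs, invZeta, mul_inv, inv_inv, div_eq_mul_inv]

lemma riemannZeta₁_ne_zero (hs : s ≠ 1) (h : riemannZeta s ≠ 0) : riemannZeta₁ s ≠ 0 := by
  rw [riemannZeta_eq_inv_sub_mul hs] at h
  exact right_ne_zero_of_mul h

lemma analyticAt_invZeta (hs : riemannZeta₁ s ≠ 0) : AnalyticAt ℂ invZeta s :=
  (analyticAt_id.sub analyticAt_const).div (differentiable_riemannZeta₁.analyticAt s) hs

lemma riemannZeta₁_ne_zero_of_one_le_re (hs : 1 ≤ s.re) : riemannZeta₁ s ≠ 0 := by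
  rcases eq_or_ne s 1 with rfl | hs1
  · simp
  · exact riemannZeta₁_ne_zero hs1 (riemannZeta_ne_zero_of_one_le_re hs)

lemma LSeries_moebius_eq_invZeta (hs : 1 < s.re) : L ↗μ s = invZeta s := by
  have h := ArithmeticFunction.LSeries_zeta_mul_Lseries_moebius hs
  rw [ArithmeticFunction.LSeries_zeta_eq_riemannZeta hs] at h
  rw [invZeta_eq_inv (by rintro rfl; simp at hs)]
  exact (inv_eq_of_mul_eq_one_right h).symm

lemma exists_norm_inv_riemannZeta_le (hε0 : 0 < ε) (hε1 : ε ≤ 1) :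
    ∃ c A, 0 < c ∧ 0 < A ∧ ∀ s : ℂ, 1 ≤ s.re → s.re ≤ 2 → 2 ≤ |s.im| →
      ∀ z ∈ Metric.closedBall s (c / (|s.im| ^ ε) ^ 8),
        z ≠ 1 ∧ riemannZeta z ≠ 0 ∧ ‖(riemannZeta z)⁻¹‖ ≤ A * (|s.im| ^ ε) ^ 7 := by
  obtain ⟨c, hc, hcε, hlower⟩ := exists_le_norm_riemannZeta hε0 hε1
  refine ⟨c / 2 ^ 8, 2 ^ 7 / c, by positivity, by positivity, fun s hs hs2 ht z hz ↦ ?_⟩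
  set T : ℝ := |s.im| ^ ε
  have hT : 1 ≤ T := Real.one_le_rpow (by linarith) hε0.le
  have hr : c / 2 ^ 8 / T ^ 8 ≤ 1 / 2 := by
    refine (div_le_self (by positivity) (one_le_pow₀ hT)).trans ?_
    linarith
  rw [Metric.mem_closedBall, dist_eq_norm] at hz
  have him := abs_im_mem_Icc_of_norm_sub_le (by linarith) (hz.trans hr)
  have hre := abs_re_sub_le_of_norm_sub_le hz
  have hz1 : 1 ≤ |z.im| := by linarith [him.1]
  have hTz : |z.im| ^ ε ≤ 2 * T := (Real.rpow_le_rpow (abs_nonneg _) him.2 hε0.le).trans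
    (const_mul_rpow_le one_le_two (abs_nonneg _) hε1)
  have : 0 < |z.im| ^ ε := Real.rpow_pos_of_pos (by linarith) _
  have hradius : c / 2 ^ 8 / T ^ 8 ≤ c / (|z.im| ^ ε) ^ 8 := by
    rw [div_div, ← mul_pow]; gcongr
  have hζ := hlower z hz1 (by linarith) (by linarith)
  have hpos : 0 < c / (|z.im| ^ ε) ^ 7 := by positivity
  refine ⟨ne_one_of_im_ne_zero (abs_pos.1 (by linarith)), norm_pos_iff.1 (hpos.trans_le hζ), ?_⟩
  calc ‖(riemannZeta z)⁻¹‖ ≤ (c / (|z.im| ^ ε) ^ 7)⁻¹ := by rw [norm_inv]; gcongr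
    _ ≤ (c / (2 * T) ^ 7)⁻¹ := by gcongr
    _ = 2 ^ 7 / c * T ^ 7 := by rw [inv_div]; ring

lemma exists_norm_iteratedDeriv_invZeta_le_of_two_le (k : ℕ) (hε0 : 0 < ε) (hε1 : ε ≤ 1) :
    ∃ C, 0 ≤ C ∧ ∀ s : ℂ, 1 ≤ s.re → s.re ≤ 2 → 2 ≤ |s.im| →
      ‖iteratedDeriv k invZeta s‖ ≤ C * |s.im| ^ (ε * (7 + 8 * k)) := by
  obtain ⟨c, A, hc, hA, hinv⟩ := exists_norm_inv_riemannZeta_le hε0 hε1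
  refine ⟨k.factorial * A / c ^ k, by positivity, fun s hs hs2 ht ↦ ?_⟩
  have hT_pow : |s.im| ^ (ε * (7 + 8 * k)) = (|s.im| ^ ε) ^ (7 + 8 * k) := by
    rw [← Real.rpow_natCast, ← Real.rpow_mul (abs_nonneg _)]
    push_cast
    rfl
  rw [hT_pow]
  set T : ℝ := |s.im| ^ ε
  have hT : 0 < T := Real.rpow_pos_of_pos (by linarith) _
  have hr : 0 < c / T ^ 8 := by positivity
  have hdiff : DiffContOnCl ℂ invZeta (Metric.ball s (c / T ^ 8)) := by
    refine DifferentiableOn.diffContOnCl fun z hz ↦ ?_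
    rw [closure_ball _ hr.ne'] at hz
    obtain ⟨hz1, hζz, -⟩ := hinv s hs hs2 ht z hz
    exact (analyticAt_invZeta
      (riemannZeta₁_ne_zero hz1 hζz)).differentiableAt.differentiableWithinAt
  calc ‖iteratedDeriv k invZeta s‖ ≤ k.factorial * (A * T ^ 7) / (c / T ^ 8) ^ k := by
        refine Complex.norm_iteratedDeriv_le_of_forall_mem_sphere_norm_le k hr hdiff fun z hz ↦ ?_
        obtain ⟨hz1, -, hle⟩ := hinv s hs hs2 ht z (Metric.sphere_subset_closedBall hz)
        rwa [invZeta_eq_inv hz1]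
    _ = k.factorial * A / c ^ k * T ^ (7 + 8 * k) := by rw [pow_add, pow_mul, div_pow]; field_simp

lemma exists_norm_iteratedDeriv_invZeta_le_of_le_two (k : ℕ) :
    ∃ C, ∀ s : ℂ, 1 ≤ s.re → s.re ≤ 2 → |s.im| ≤ 2 → ‖iteratedDeriv k invZeta s‖ ≤ C := by
  have hcompact : IsCompact (Set.Icc (1 : ℝ) 2 ×ℂ Set.Icc (-2 : ℝ) 2) :=
    isCompact_Icc.reProdIm isCompact_Icc
  obtain ⟨C, hC⟩ := hcompact.exists_bound_of_continuousOn (f := iteratedDeriv k invZeta)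
    fun s hs ↦ by
      rw [iteratedDeriv_eq_iterate]
      exact ((analyticAt_invZeta (riemannZeta₁_ne_zero_of_one_le_re
        hs.1.1)).iterated_deriv k).continuousAt.continuousWithinAt
  exact ⟨C, fun s h1 h2 h3 ↦ hC s ⟨⟨h1, h2⟩, abs_le.1 h3⟩⟩

lemma exists_norm_iteratedDeriv_invZeta_le (k : ℕ) (hε0 : 0 < ε) (hε1 : ε ≤ 1) :
    ∃ C, 0 ≤ C ∧ ∀ s : ℂ, 1 ≤ s.re → s.re ≤ 2 →
      ‖iteratedDeriv k invZeta s‖ ≤ C * (1 + |s.im|) ^ (ε * (7 + 8 * k)) := by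
  obtain ⟨C₁, hsmall⟩ := exists_norm_iteratedDeriv_invZeta_le_of_le_two k
  obtain ⟨C₂, hC₂, hlarge⟩ := exists_norm_iteratedDeriv_invZeta_le_of_two_le k hε0 hε1
  refine ⟨max C₁ C₂, le_max_of_le_right hC₂, fun s hs hs2 ↦ ?_⟩
  have hexp : 0 ≤ ε * (7 + 8 * k) := by positivity
  rcases le_total |s.im| 2 with h | h
  · refine (hsmall s hs hs2 h).trans ((le_max_left C₁ C₂).trans ?_)
    exact le_mul_of_one_le_right (le_max_of_le_right hC₂)
      (Real.one_le_rpow (by linarith [abs_nonneg s.im]) hexp)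
  · refine (hlarge s hs hs2 h).trans ?_
    gcongr
    · exact le_max_right _ _
    · linarith

lemma logMul_iterate_apply (f : ℕ → ℂ) (k n : ℕ) :
    LSeries.logMul^[k] f n = Real.log n ^ k * f n := by
  induction k with
  | zero => simp
  | succ k ih =>
    rw [Function.iterate_succ_apply', LSeries.logMul, ih, Complex.natCast_log, pow_succ']
    ring

lemma LSeries_logMul_iterate_moebius (k : ℕ) (hs : 1 < s.re) :
    L (LSeries.logMul^[k] ↗μ) s = (-1) ^ k * iteratedDeriv k invZeta s := by
  have hevent : L ↗μ =ᶠ[nhds s] invZeta := by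
    filter_upwards [(isOpen_lt continuous_const Complex.continuous_re).mem_nhds hs] with z hz
    exact LSeries_moebius_eq_invZeta hz
  rw [← hevent.iteratedDeriv_eq k, LSeries_iteratedDeriv, ← mul_assoc, ← mul_pow]
  · simp
  · rw [ArithmeticFunction.abscissaOfAbsConv_moebius]
    exact_mod_cast hs

lemma exists_norm_LSeries_logMul_iterate_moebius_le (k : ℕ) (hε0 : 0 < ε) (hε1 : ε ≤ 1) :
    ∃ C, 0 ≤ C ∧ ∀ s : ℂ, 1 < s.re → s.re ≤ 2 →
      ‖L (LSeries.logMul^[k] ↗μ) s‖ ≤ C * (1 + |s.im|) ^ (ε * (7 + 8 * k)) := by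
  obtain ⟨C, hC, hderiv⟩ := exists_norm_iteratedDeriv_invZeta_le k hε0 hε1
  refine ⟨C, hC, fun s hs hs2 ↦ ?_⟩
  simpa [LSeries_logMul_iterate_moebius k hs] using hderiv s hs.le hs2

lemma LSeriesSummable_logMul_iterate_moebius (k : ℕ) (hs : 1 < s.re) :
    LSeriesSummable (LSeries.logMul^[k] ↗μ) s := by
  refine LSeriesSummable_of_abscissaOfAbsConv_lt_re ?_
  rw [LSeries.absicssaOfAbsConv_logPowMul, ArithmeticFunction.abscissaOfAbsConv_moebius]
  exact_mod_cast hs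

end InvZeta

/-- The Cesàro kernel `max (1 - t) 0`, complex valued so that its Mellin transform can be taken. -/
noncomputable def cesaroKernel (t : ℝ) : ℂ := (max (1 - t) 0 : ℝ)

/-- The Mellin transform `∫₀¹ (1 - t) t ^ (s - 1) dt` of `cesaroKernel`. -/
noncomputable def cesaroMellin (s : ℂ) : ℂ := 1 / (s * (s + 1))

section Perron

open MeasureTheory Complex

variable {σ x θ : ℝ} {s : ℂ} {a : ℕ → ℂ}

lemma cesaroKernel_eq_indicator_sub {t : ℝ} (ht : 0 < t) :
    cesaroKernel t = (Set.Ioc (0 : ℝ) 1).indicator (fun _ ↦ (1 : ℂ)) t -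
      (Set.Ioc (0 : ℝ) 1).indicator (fun t : ℝ ↦ (t : ℂ) ^ (1 : ℂ)) t := by
  rcases le_or_gt t 1 with h | h
  · simp [cesaroKernel, ht, h]
  · simp [cesaroKernel, h.not_ge, max_eq_right (sub_nonpos.2 h.le)]

lemma hasMellin_cesaroKernel (hs : 0 < s.re) :
    HasMellin cesaroKernel s (cesaroMellin s) := by
  have hone := hasMellin_one_Ioc hs
  have hid := hasMellin_cpow_Ioc 1 (s := s) (by rw [one_re]; linarith)
  have hsub := hasMellin_sub hone.1 hid.1
  have hcongr : Set.EqOn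
      (fun t : ℝ ↦ (t : ℂ) ^ (s - 1) • ((Set.Ioc (0 : ℝ) 1).indicator (fun _ ↦ (1 : ℂ)) t -
        (Set.Ioc (0 : ℝ) 1).indicator (fun t : ℝ ↦ (t : ℂ) ^ (1 : ℂ)) t))
      (fun t : ℝ ↦ (t : ℂ) ^ (s - 1) • cesaroKernel t) (Set.Ioi 0) := fun t ht ↦ by
    simp only [cesaroKernel_eq_indicator_sub ht]
  refine ⟨hsub.1.congr_fun hcongr measurableSet_Ioi, ?_⟩
  have hs0 : s ≠ 0 := by rintro rfl; simp at hs
  have hs1 : s + 1 ≠ 0 := fun h ↦ by have := congrArg re h; simp at this; linarith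
  calc mellin cesaroKernel s = _ := (setIntegral_congr_fun measurableSet_Ioi hcongr).symm
    _ = 1 / s - 1 / (s + 1) := by rw [← hone.2, ← hid.2]; exact hsub.2
    _ = cesaroMellin s := by rw [cesaroMellin]; field_simp; ring

lemma norm_cesaroMellin_le (hσ : 1 ≤ σ) (u : ℝ) :
    ‖cesaroMellin (σ + u * I)‖ ≤ 4 * (1 + ‖u‖) ^ (-2 : ℝ) := by
  have hlower : ∀ τ : ℝ, 1 ≤ τ → (1 + ‖u‖) / 2 ≤ ‖(τ + u * I : ℂ)‖ := fun τ hτ ↦ by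
    have hre := abs_re_le_norm (τ + u * I)
    have him := abs_im_le_norm (τ + u * I)
    simp only [add_re, ofReal_re, mul_re, I_re, mul_zero, ofReal_im, I_im, mul_one, sub_self,
      add_zero, add_im, mul_im, zero_add] at hre him
    rw [Real.norm_eq_abs]
    linarith [le_abs_self τ]
  have h1 := hlower σ hσ
  have h2 := hlower (σ + 1) (by linarith)
  have hu : 0 < 1 + ‖u‖ := by positivity
  rw [cesaroMellin, norm_div, norm_one, norm_mul, add_right_comm, ← ofReal_one, ← ofReal_add]
  calc 1 / (‖(σ + u * I : ℂ)‖ * ‖((σ + 1 : ℝ) + u * I : ℂ)‖)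
      ≤ 1 / ((1 + ‖u‖) / 2 * ((1 + ‖u‖) / 2)) := by gcongr
    _ = 4 * (1 + ‖u‖) ^ (-2 : ℝ) := by
        rw [Real.rpow_neg hu.le, Real.rpow_two]; field_simp; norm_num

lemma continuous_cesaroMellin (hσ : 0 < σ) : Continuous fun u : ℝ ↦ cesaroMellin (σ + u * I) := by
  refine continuous_const.div (by fun_prop) fun u ↦ mul_ne_zero ?_ ?_ <;>
  · intro h
    have := congrArg re h
    simp only [add_re, ofReal_re, mul_re, I_re, mul_zero, ofReal_im, I_im, mul_one, sub_self,
      add_zero, one_re, zero_re] at this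
    linarith

lemma integrable_cesaroMellin (hσ : 1 ≤ σ) :
    Integrable fun u : ℝ ↦ cesaroMellin (σ + u * I) :=
  ((integrable_one_add_norm (by simp)).const_mul 4).mono'
    (continuous_cesaroMellin (by linarith)).aestronglyMeasurable
    (.of_forall fun u ↦ norm_cesaroMellin_le hσ u)

lemma mellinInv_cesaroMellin (hσ : 1 ≤ σ) {y : ℝ} (hy : 0 < y) :
    mellinInv σ cesaroMellin y = cesaroKernel y := by
  have hline : ∀ u : ℝ, mellin cesaroKernel (σ + u * I) = cesaroMellin (σ + u * I) := fun u ↦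
    (hasMellin_cesaroKernel (by simp; linarith)).2
  have hcont : Continuous cesaroKernel := by unfold cesaroKernel; fun_prop
  rw [← mellinInv_mellin_eq σ cesaroKernel hy
    (hasMellin_cesaroKernel (by simp; linarith)).1
    (by simpa only [VerticalIntegrable, hline] using integrable_cesaroMellin hσ)
    hcont.continuousAt]
  simp only [mellinInv, hline]

/-- The weight against which `L(a, s)` is integrated along `re s = σ` in Perron's formula. -/
noncomputable def perronWeight (σ x u : ℝ) : ℂ :=
  (x : ℂ) ^ (σ + u * I : ℂ) * cesaroMellin (σ + u * I)

lemma norm_perronWeight (hx : 0 < x) (u : ℝ) :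
    ‖perronWeight σ x u‖ = x ^ σ * ‖cesaroMellin (σ + u * I)‖ := by
  rw [perronWeight, norm_mul, norm_cpow_eq_rpow_re_of_pos hx]
  simp

lemma integrable_perronWeight (hσ : 1 ≤ σ) (hx : 0 < x) : Integrable (perronWeight σ x) := by
  have hcont : Continuous (perronWeight σ x) :=
    (Continuous.const_cpow (by fun_prop) (.inl (ofReal_ne_zero.2 hx.ne'))).mul
      (continuous_cesaroMellin (by linarith))
  exact ((integrable_cesaroMellin hσ).norm.const_mul (x ^ σ)).mono' hcont.aestronglyMeasurable
    (.of_forall fun u ↦ (norm_perronWeight hx u).le)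

lemma norm_term_vertical (a : ℕ → ℂ) (n : ℕ) (u : ℝ) :
    ‖LSeries.term a (σ + u * I) n‖ = ‖LSeries.term a σ n‖ := by
  simp [LSeries.norm_term_eq]

lemma integrable_term_mul_perronWeight (hσ : 1 ≤ σ) (hx : 0 < x) (n : ℕ) :
    Integrable fun u : ℝ ↦ LSeries.term a (σ + u * I) n * perronWeight σ x u := by
  have hcont : Continuous fun z ↦ LSeries.term a z n :=
    continuous_iff_continuousAt.2 fun z ↦ (LSeries.hasDerivAt_term a n z).continuousAt
  exact (integrable_perronWeight hσ hx).bdd_mul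
    (hcont.comp (by fun_prop)).aestronglyMeasurable
    (.of_forall fun u ↦ (norm_term_vertical a n u).le)

lemma integral_term_mul_perronWeight (hσ : 1 ≤ σ) (hx : 0 < x) {n : ℕ} (hn : n ≠ 0) :
    ∫ u : ℝ, LSeries.term a (σ + u * I) n * perronWeight σ x u =
      2 * Real.pi * (a n * cesaroKernel (n / x)) := by
  have hn0 : (0 : ℝ) < n := by exact_mod_cast hn.bot_lt
  have hfactor : ∀ u : ℝ, LSeries.term a (σ + u * I) n * perronWeight σ x u =
      a n * (((n / x : ℝ) : ℂ) ^ (-(σ + u * I) : ℂ) • cesaroMellin (σ + u * I)) := fun u ↦ by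
    rw [LSeries.term_of_ne_zero hn, perronWeight, cpow_neg, ofReal_div,
      div_cpow_ofReal_nonneg hn0.le hx.le, inv_div, ofReal_natCast, smul_eq_mul]
    ring
  have hinv := mellinInv_cesaroMellin hσ (div_pos hn0 hx)
  have hpi : (2 * Real.pi : ℂ) * ((1 / (2 * Real.pi) : ℝ) : ℂ) = 1 := by
    push_cast
    exact mul_one_div_cancel (by simp [Real.pi_ne_zero])
  simp_rw [hfactor, integral_const_mul, ← hinv, mellinInv, real_smul]
  rw [mul_left_comm, ← mul_assoc (2 * _ : ℂ), hpi, one_mul]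

lemma hasSum_mul_cesaroKernel (a : ℕ → ℂ) (hx : 0 < x) :
    HasSum (fun n ↦ if n = 0 then 0 else a n * cesaroKernel (n / x))
      (∑ n ∈ Ioc 0 ⌊x⌋₊, a n * (1 - n / x)) := by
  have hsum : ∑ n ∈ Ioc 0 ⌊x⌋₊, a n * (1 - n / x) =
      ∑ n ∈ Ioc 0 ⌊x⌋₊, if n = 0 then 0 else a n * cesaroKernel (n / x) := by
    refine Finset.sum_congr rfl fun n hn ↦ ?_
    obtain ⟨hn0, hnx⟩ := Finset.mem_Ioc.1 hn
    have : 0 ≤ 1 - n / x := sub_nonneg.2 ((div_le_one hx).2 ((Nat.le_floor_iff hx.le).1 hnx))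
    simp [cesaroKernel, hn0.ne', max_eq_left this]
  rw [hsum]
  refine hasSum_sum_of_ne_finset_zero fun n hn ↦ ?_
  rcases eq_or_ne n 0 with rfl | hn0
  · simp
  · have hnx : x < n := (Nat.floor_lt hx.le).1 (by
      by_contra! h
      exact hn (Finset.mem_Ioc.2 ⟨hn0.bot_lt, h⟩))
    have : 1 - n / x ≤ 0 := sub_nonpos.2 ((one_le_div hx).2 hnx.le)
    simp [cesaroKernel, max_eq_right this]

lemma integral_LSeries_mul_perronWeight (hσ : 1 ≤ σ) (hx : 0 < x) (ha : LSeriesSummable a σ) :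
    ∫ u : ℝ, LSeries a (σ + u * I) * perronWeight σ x u =
      2 * Real.pi * ∑ n ∈ Ioc 0 ⌊x⌋₊, a n * (1 - n / x) := by
  have hsummable : Summable fun n ↦
      ∫ u : ℝ, ‖LSeries.term a (σ + u * I) n * perronWeight σ x u‖ := by
    simp_rw [norm_mul, norm_term_vertical, integral_const_mul]
    exact ha.norm.mul_right _
  have hswap := hasSum_integral_of_summable_integral_norm
    (fun n ↦ integrable_term_mul_perronWeight hσ hx n) hsummable
  simp_rw [tsum_mul_right] at hswap
  refine hswap.unique (((hasSum_mul_cesaroKernel a hx).mul_left (2 * Real.pi : ℂ)).congr_fun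
    fun n ↦ ?_)
  rcases eq_or_ne n 0 with rfl | hn
  · simp
  · rw [if_neg hn, integral_term_mul_perronWeight hσ hx hn]

lemma norm_sum_mul_one_sub_div_le {C : ℝ} (hσ : 1 ≤ σ) (hx : 0 < x) (hθ : θ < 1)
    (ha : LSeriesSummable a σ)
    (hC : ∀ u : ℝ, ‖LSeries a (σ + u * I)‖ ≤ C * (1 + ‖u‖) ^ θ) :
    ‖∑ n ∈ Ioc 0 ⌊x⌋₊, a n * (1 - n / x)‖ ≤
      4 * C * x ^ σ * ∫ u : ℝ, (1 + ‖u‖) ^ (-(2 - θ)) := by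
  have hpointwise : ∀ u : ℝ, ‖LSeries a (σ + u * I) * perronWeight σ x u‖ ≤
      4 * C * x ^ σ * (1 + ‖u‖) ^ (-(2 - θ)) := fun u ↦ by
    have hu : 0 < 1 + ‖u‖ := by positivity
    have hC0 : 0 ≤ C * (1 + ‖u‖) ^ θ := (norm_nonneg _).trans (hC u)
    calc ‖LSeries a (σ + u * I) * perronWeight σ x u‖
        ≤ C * (1 + ‖u‖) ^ θ * (x ^ σ * (4 * (1 + ‖u‖) ^ (-2 : ℝ))) := by
          rw [norm_mul, norm_perronWeight hx]
          gcongr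
          · exact hC u
          · exact norm_cesaroMellin_le hσ u
      _ = 4 * C * x ^ σ * (1 + ‖u‖) ^ (-(2 - θ)) := by
          rw [neg_sub, sub_eq_add_neg, Real.rpow_add hu]; ring
  have hintegrable : Integrable fun u : ℝ ↦ 4 * C * x ^ σ * (1 + ‖u‖) ^ (-(2 - θ)) :=
    (integrable_one_add_norm (by simp; linarith)).const_mul _
  have hnorm := norm_integral_le_of_norm_le hintegrable (.of_forall hpointwise)
  rw [integral_LSeries_mul_perronWeight hσ hx ha, integral_const_mul, norm_mul] at hnorm
  refine (le_mul_of_one_le_left (norm_nonneg _) ?_).trans hnorm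
  rw [norm_mul, RCLike.norm_ofNat, Complex.norm_of_nonneg Real.pi_pos.le]
  linarith [Real.pi_gt_three]

lemma exists_norm_sum_mul_one_sub_div_le {C : ℝ} (hθ : θ < 1)
    (ha : ∀ s : ℂ, 1 < s.re → LSeriesSummable a s)
    (hC : ∀ s : ℂ, 1 < s.re → s.re ≤ 2 → ‖LSeries a s‖ ≤ C * (1 + |s.im|) ^ θ) :
    ∃ K, 0 ≤ K ∧ ∀ x : ℝ, 3 ≤ x → ‖∑ n ∈ Ioc 0 ⌊x⌋₊, a n * (1 - n / x)‖ ≤ K * x := by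
  have hC0 : 0 ≤ C := by simpa using (norm_nonneg _).trans (hC 2 (by simp) (by simp))
  set J : ℝ := ∫ u : ℝ, (1 + ‖u‖) ^ (-(2 - θ))
  have : 0 ≤ J := integral_nonneg fun u ↦ by positivity
  refine ⟨4 * C * 3 * J, by positivity, fun x hx ↦ ?_⟩
  have hx0 : 0 < x := by linarith
  have hlog : 1 ≤ Real.log x :=
    (Real.le_log_iff_exp_le hx0).2 (by linarith [Real.exp_one_lt_d9])
  set σ : ℝ := 1 + (Real.log x)⁻¹
  have hσ1 : 1 < σ := lt_add_of_pos_right _ (by positivity)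
  have hσ2 : σ ≤ 2 := by linarith [inv_le_one_of_one_le₀ hlog]
  have hxσ : x ^ σ ≤ 3 * x := by
    rw [Real.rpow_add hx0, Real.rpow_one, Real.rpow_def_of_pos hx0, mul_inv_cancel₀ (by linarith)]
    nlinarith [Real.exp_one_lt_d9]
  calc ‖∑ n ∈ Ioc 0 ⌊x⌋₊, a n * (1 - n / x)‖ ≤ 4 * C * x ^ σ * J :=
        norm_sum_mul_one_sub_div_le hσ1.le hx0 hθ (ha σ (by simpa using hσ1)) fun u ↦ by
          simpa using hC (σ + u * I) (by simpa using hσ1) (by simpa using hσ2)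
    _ ≤ 4 * C * (3 * x) * J := by gcongr
    _ = 4 * C * 3 * J * x := by ring

end Perron

section Summation

variable {E : Type*} [NormedAddCommGroup E] [NormedSpace ℝ E] {a : ℕ → E} {m n k N : ℕ}

lemma norm_sum_Ioc_smul_le {w : ℕ → ℝ} {B : ℝ} (hw : AntitoneOn w (Set.Ioi m))
    (hw0 : ∀ i, m < i → 0 ≤ w i) (hmn : m < n)
    (ha : ∀ k, m < k → k ≤ n → ‖∑ i ∈ Ioc m k, a i‖ ≤ B) :
    ‖∑ i ∈ Ioc m n, w i • a i‖ ≤ w (m + 1) * B := by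
  have hpartial : ∀ k, m + 1 ≤ k → k ≤ n →
      ‖∑ i ∈ Ioc m k, w i • a i - w k • ∑ i ∈ Ioc m k, a i‖ ≤ (w (m + 1) - w k) * B := by
    intro k hk
    induction k, hk using Nat.le_induction with
    | base => simp
    | succ k hk ih =>
      intro hkn
      have hstep : 0 ≤ w k - w (k + 1) := sub_nonneg.2 (hw hk (hk.trans k.le_succ) k.le_succ)
      rw [sum_Ioc_succ_top (by lia), sum_Ioc_succ_top (by lia)]
      calc ‖_‖ = ‖(∑ i ∈ Ioc m k, w i • a i - w k • ∑ i ∈ Ioc m k, a i) +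
            (w k - w (k + 1)) • ∑ i ∈ Ioc m k, a i‖ := by
            congr 1; module
        _ ≤ (w (m + 1) - w k) * B + (w k - w (k + 1)) * B := by
            refine norm_add_le_of_le (ih (by lia)) ?_
            rw [norm_smul, Real.norm_of_nonneg hstep]
            exact mul_le_mul_of_nonneg_left (ha k hk (by lia)) hstep
        _ = (w (m + 1) - w (k + 1)) * B := by ring
  calc ‖∑ i ∈ Ioc m n, w i • a i‖
      = ‖(∑ i ∈ Ioc m n, w i • a i - w n • ∑ i ∈ Ioc m n, a i) + w n • ∑ i ∈ Ioc m n, a i‖ := by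
        rw [sub_add_cancel]
    _ ≤ (w (m + 1) - w n) * B + w n * B := by
        refine norm_add_le_of_le (hpartial n hmn le_rfl) ?_
        rw [norm_smul, Real.norm_of_nonneg (hw0 n hmn)]
        exact mul_le_mul_of_nonneg_left (ha n hmn le_rfl) (hw0 n hmn)
    _ = w (m + 1) * B := by ring

/-- The Cesàro-weighted summatory function `∑ n ≤ N, (N - n) a n`. -/
noncomputable def cesaroSum (a : ℕ → E) (N : ℕ) : E := ∑ n ∈ Ioc 0 N, ((N : ℝ) - n) • a n

lemma smul_sum_Ioc_eq_cesaroSum_sub (a : ℕ → E) (N k : ℕ) :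
    (k : ℝ) • ∑ n ∈ Ioc 0 N, a n = cesaroSum a (N + k) - cesaroSum a N -
      ∑ n ∈ Ioc N (N + k), (((N + k : ℕ) : ℝ) - n) • a n := by
  have hdiff : ∀ n : ℕ, (((N + k : ℕ) : ℝ) - n) • a n = ((N : ℝ) - n) • a n + (k : ℝ) • a n :=
    fun n ↦ by rw [← add_smul]; push_cast; ring_nf
  rw [cesaroSum, ← sum_Ioc_consecutive _ N.zero_le (N.le_add_right k), add_sub_right_comm,
    add_sub_cancel_right]
  simp only [hdiff, sum_add_distrib, cesaroSum, add_sub_cancel_left, smul_sum]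

lemma mul_norm_sum_Ioc_le {A : ℝ} (hA : ∀ n ∈ Ioc N (N + k), ‖a n‖ ≤ A) :
    k * ‖∑ n ∈ Ioc 0 N, a n‖ ≤ ‖cesaroSum a (N + k)‖ + ‖cesaroSum a N‖ + k * (k * A) := by
  have hshort : ‖∑ n ∈ Ioc N (N + k), (((N + k : ℕ) : ℝ) - n) • a n‖ ≤ k * (k * A) := by
    have hterm : ∀ n ∈ Ioc N (N + k), ‖(((N + k : ℕ) : ℝ) - n) • a n‖ ≤ k * A := fun n hn ↦ by
      obtain ⟨hNn, hnk⟩ := Finset.mem_Ioc.1 hn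
      have hNn : (N : ℝ) ≤ n := by exact_mod_cast hNn.le
      have hnk : (n : ℝ) ≤ (N + k : ℕ) := by exact_mod_cast hnk
      rw [norm_smul, Real.norm_of_nonneg (sub_nonneg.2 hnk)]
      gcongr
      · push_cast; linarith
      · exact hA n hn
    simpa using norm_sum_le_of_le _ hterm
  calc (k : ℝ) * ‖∑ n ∈ Ioc 0 N, a n‖ = ‖(k : ℝ) • ∑ n ∈ Ioc 0 N, a n‖ := by simp [norm_smul]
    _ ≤ ‖cesaroSum a (N + k)‖ + ‖cesaroSum a N‖ + k * (k * A) := by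
        rw [smul_sum_Ioc_eq_cesaroSum_sub]
        exact norm_sub_le_of_le (norm_sub_le _ _) hshort

lemma log_sq_le_mul_sqrt {x : ℝ} (hx : 1 ≤ x) : Real.log x ^ 2 ≤ 16 * √x := by
  have hx0 : 0 ≤ x := by linarith
  calc Real.log x ^ 2 ≤ (x ^ (1 / 4 : ℝ) / (1 / 4)) ^ 2 :=
        pow_le_pow_left₀ (Real.log_nonneg hx) (Real.log_le_rpow_div hx0 (by norm_num)) 2
    _ = 16 * √x := by
        rw [div_pow, ← Real.rpow_mul_natCast hx0, Real.sqrt_eq_rpow]; norm_num; ring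

lemma one_le_log_natCast (hN : 3 ≤ N) : 1 ≤ Real.log N := by
  have hN : (3 : ℝ) ≤ N := by exact_mod_cast hN
  exact (Real.le_log_iff_exp_le (by linarith)).2 (by linarith [Real.exp_one_lt_d9])

lemma log_natCast_add_le (hN : 2 ≤ N) (hkN : k ≤ N) :
    Real.log (N + k : ℕ) ≤ 2 * Real.log N := by
  rw [← Nat.cast_ofNat, ← Real.log_pow]
  exact Real.log_le_log (by positivity) (by exact_mod_cast (by nlinarith : N + k ≤ N ^ 2))

lemma exists_le_mul_log_sq (hN : 3 ≤ N) :
    ∃ k : ℕ, 0 < k ∧ k ≤ N ∧ (N : ℝ) ≤ k * Real.log N ^ 2 ∧ k * Real.log N ^ 2 ≤ 17 * N := by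
  have hL : 1 ≤ Real.log N := one_le_log_natCast hN
  have hN1 : (1 : ℝ) ≤ N := by exact_mod_cast (by lia : 1 ≤ N)
  have hL2 : 0 < Real.log N ^ 2 := by positivity
  have hsqrt : √(N : ℝ) ≤ N := Real.sqrt_le_iff.2 ⟨by positivity, le_self_pow₀ hN1 two_ne_zero⟩
  have hlogN : Real.log N ^ 2 ≤ 16 * N := by linarith [log_sq_le_mul_sqrt hN1]
  refine ⟨⌈N / Real.log N ^ 2⌉₊, Nat.ceil_pos.2 (by positivity),
    Nat.ceil_le.2 (div_le_self (by positivity) (one_le_pow₀ hL)),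
    (div_le_iff₀ hL2).1 (Nat.le_ceil _), ?_⟩
  calc ⌈N / Real.log N ^ 2⌉₊ * Real.log N ^ 2 ≤ (N / Real.log N ^ 2 + 1) * Real.log N ^ 2 := by
        gcongr; exact (Nat.ceil_lt_add_one (by positivity)).le
    _ = N + Real.log N ^ 2 := by field_simp
    _ ≤ 17 * N := by linarith

lemma norm_sum_Ioc_le_mul_log_sq {K : ℝ} (hK : 0 ≤ K)
    (hcesaro : ∀ N, 3 ≤ N → ‖cesaroSum a N‖ ≤ K * N ^ 2)
    (ha : ∀ n, ‖a n‖ ≤ Real.log n ^ 4) (hN : 3 ≤ N) :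
    ‖∑ n ∈ Ioc 0 N, a n‖ ≤ (5 * K + 272) * (N * Real.log N ^ 2) := by
  obtain ⟨k, hk0, hkN, hNk, hkL⟩ := exists_le_mul_log_sq hN
  have : 0 ≤ Real.log N := Real.log_natCast_nonneg N
  have hk0 : (0 : ℝ) < k := by exact_mod_cast hk0
  have hterm : ∀ n ∈ Ioc N (N + k), ‖a n‖ ≤ (2 * Real.log N) ^ 4 := fun n hn ↦ by
    obtain ⟨hNn, hnk⟩ := Finset.mem_Ioc.1 hn
    refine (ha n).trans (pow_le_pow_left₀ (Real.log_natCast_nonneg n) ?_ 4)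
    refine (Real.log_le_log ?_ ?_).trans (log_natCast_add_le (by lia) hkN)
    · exact_mod_cast (by lia : 0 < n)
    · exact_mod_cast hnk
  have hsmooth : ‖cesaroSum a (N + k)‖ ≤ K * (2 * N) ^ 2 := by
    refine (hcesaro (N + k) (by lia)).trans ?_
    gcongr
    exact_mod_cast (by lia : N + k ≤ 2 * N)
  refine le_of_mul_le_mul_left ?_ hk0
  calc k * ‖∑ n ∈ Ioc 0 N, a n‖
      ≤ ‖cesaroSum a (N + k)‖ + ‖cesaroSum a N‖ + k * (k * (2 * Real.log N) ^ 4) :=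
        mul_norm_sum_Ioc_le hterm
    _ ≤ K * (2 * N) ^ 2 + K * N ^ 2 + k * (k * (2 * Real.log N) ^ 4) := by
        gcongr; exact hcesaro N hN
    _ = 5 * K * N * N + 16 * k * Real.log N ^ 2 * (k * Real.log N ^ 2) := by ring
    _ ≤ 5 * K * N * (k * Real.log N ^ 2) + 16 * k * Real.log N ^ 2 * (17 * N) := by gcongr
    _ = k * ((5 * K + 272) * (N * Real.log N ^ 2)) := by ring

end Summation

section Mertens

open ArithmeticFunction
open scoped ArithmeticFunction.Moebius LSeries.notation

/-- The Mertens function `M(N) = ∑ n ≤ N, μ n`. -/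
def mertensSum (N : ℕ) : ℤ := ∑ n ∈ Ioc 0 N, μ n

lemma norm_mertensSum_le (N : ℕ) : ‖mertensSum N‖ ≤ N := by
  have hterm : ∀ n ∈ Ioc 0 N, ‖μ n‖ ≤ 1 := fun n _ ↦ by
    rw [Int.norm_eq_abs]; exact_mod_cast abs_moebius_le_one
  simpa [mertensSum] using norm_sum_le_of_le _ hterm

lemma norm_logMul_iterate_moebius_le (k n : ℕ) :
    ‖LSeries.logMul^[k] ↗μ n‖ ≤ Real.log n ^ k := by
  have hμ : ‖(μ n : ℂ)‖ ≤ 1 := by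
    rw [Complex.norm_intCast]; exact_mod_cast abs_moebius_le_one
  have hlog : 0 ≤ Real.log n := Real.log_natCast_nonneg n
  rw [logMul_iterate_apply, norm_mul, norm_pow, Complex.norm_real, Real.norm_of_nonneg hlog]
  exact mul_le_of_le_one_right (by positivity) hμ

lemma exists_norm_cesaroSum_logMul_moebius_le :
    ∃ K, 0 ≤ K ∧ ∀ N : ℕ, 3 ≤ N → ‖cesaroSum (LSeries.logMul^[4] ↗μ) N‖ ≤ K * N ^ 2 := by
  obtain ⟨C, -, hC⟩ :=
    exists_norm_LSeries_logMul_iterate_moebius_le (ε := 1 / 50) 4 (by norm_num) (by norm_num)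
  obtain ⟨K, hK, hbound⟩ := exists_norm_sum_mul_one_sub_div_le (by norm_num)
    (fun s hs ↦ LSeriesSummable_logMul_iterate_moebius 4 hs) hC
  refine ⟨K, hK, fun N hN ↦ ?_⟩
  have hN0 : (N : ℂ) ≠ 0 := by exact_mod_cast (by lia : N ≠ 0)
  have hcesaro : cesaroSum (LSeries.logMul^[4] ↗μ) N =
      N * ∑ n ∈ Ioc 0 ⌊(N : ℝ)⌋₊, LSeries.logMul^[4] ↗μ n * (1 - n / (N : ℝ)) := by
    rw [cesaroSum, Nat.floor_natCast, mul_sum]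
    refine sum_congr rfl fun n _ ↦ ?_
    rw [Complex.real_smul]
    push_cast
    field_simp
  rw [hcesaro, norm_mul, Complex.norm_natCast]
  calc _ ≤ N * (K * N) := by gcongr; exact hbound N (by exact_mod_cast hN)
    _ = K * N ^ 2 := by ring

lemma exists_norm_sum_logMul_moebius_le :
    ∃ C, 0 ≤ C ∧ ∀ N : ℕ, 3 ≤ N →
      ‖∑ n ∈ Ioc 0 N, LSeries.logMul^[4] ↗μ n‖ ≤ C * (N * Real.log N ^ 2) := by
  obtain ⟨K, hK, hcesaro⟩ := exists_norm_cesaroSum_logMul_moebius_le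
  exact ⟨5 * K + 272, by positivity, fun N hN ↦
    norm_sum_Ioc_le_mul_log_sq hK hcesaro (norm_logMul_iterate_moebius_le 4) hN⟩

lemma norm_sum_Ioc_moebius_le {C : ℝ} (hC0 : 0 ≤ C) (hC : ∀ N : ℕ, 3 ≤ N →
      ‖∑ n ∈ Ioc 0 N, LSeries.logMul^[4] ↗μ n‖ ≤ C * (N * Real.log N ^ 2))
    {m N : ℕ} (hm : 3 ≤ m) (hmN : m < N) :
    ‖∑ n ∈ Ioc m N, (μ n : ℂ)‖ ≤
      (Real.log (m + 1 : ℕ) ^ 4)⁻¹ * (2 * C * (N * Real.log N ^ 2)) := by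
  have hlog : ∀ {i}, m < i → 0 < Real.log i := fun hi ↦
    one_pos.trans_le (one_le_log_natCast (by lia))
  have hbound : ∀ k, m ≤ k → k ≤ N →
      ‖∑ n ∈ Ioc 0 k, LSeries.logMul^[4] ↗μ n‖ ≤ C * (N * Real.log N ^ 2) := fun k hmk hkN ↦ by
    refine (hC k (by lia)).trans ?_
    have hk : (0 : ℝ) < k := by exact_mod_cast (by lia : 0 < k)
    have := Real.log_natCast_nonneg k
    gcongr
  have hweight : ∑ n ∈ Ioc m N, (μ n : ℂ) =
      ∑ n ∈ Ioc m N, (Real.log n ^ 4)⁻¹ • LSeries.logMul^[4] ↗μ n := by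
    refine sum_congr rfl fun n hn ↦ ?_
    have := (hlog (mem_Ioc.1 hn).1).ne'
    rw [logMul_iterate_apply, Complex.real_smul, Complex.ofReal_inv, Complex.ofReal_pow,
      inv_mul_cancel_left₀ (pow_ne_zero 4 (Complex.ofReal_ne_zero.2 this))]
  rw [hweight]
  refine norm_sum_Ioc_smul_le (fun i hi j _ hij ↦ ?_) (fun i _ ↦ by positivity) hmN
    fun k hmk hkN ↦ ?_
  · have := hlog hi
    have hi0 : (0 : ℝ) < i := by exact_mod_cast (Nat.zero_le m).trans_lt hi
    gcongr
  · have hsplit := sum_Ioc_consecutive (LSeries.logMul^[4] ↗μ) m.zero_le hmk.le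
    rw [← sub_eq_of_eq_add' hsplit.symm]
    calc _ ≤ C * (N * Real.log N ^ 2) + C * (N * Real.log N ^ 2) :=
          norm_sub_le_of_le (hbound k hmk.le hkN) (hbound m le_rfl hmN.le)
      _ = 2 * C * (N * Real.log N ^ 2) := by ring

lemma half_log_le_log_sqrt_add_one {N : ℕ} (hN : 0 < N) :
    Real.log N / 2 ≤ Real.log (Nat.sqrt N + 1 : ℕ) := by
  rw [← Real.log_sqrt (Nat.cast_nonneg N)]
  refine Real.log_le_log (by positivity) ?_
  rw [Nat.cast_add_one]
  exact Real.real_sqrt_le_nat_sqrt_succ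

lemma exists_norm_mertensSum_le_div_log_sq :
    ∃ C, 0 ≤ C ∧ ∀ N : ℕ, 16 ≤ N → ‖mertensSum N‖ ≤ C * (N / Real.log N ^ 2) := by
  obtain ⟨C, hC0, hC⟩ := exists_norm_sum_logMul_moebius_le
  refine ⟨16 + 32 * C, by positivity, fun N hN ↦ ?_⟩
  set m := Nat.sqrt N
  have hm : 3 ≤ m := Nat.le_sqrt.2 (by lia)
  have hmN : m < N := Nat.sqrt_lt_self (by lia)
  have hL : 1 ≤ Real.log N := one_le_log_natCast (by lia)
  have hhead : ‖mertensSum m‖ ≤ 16 * (N / Real.log N ^ 2) := by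
    refine (norm_mertensSum_le m).trans ?_
    rw [← mul_div_assoc, le_div_iff₀ (by positivity)]
    calc (m : ℝ) * Real.log N ^ 2 ≤ √N * (16 * √N) := by
          gcongr
          · exact Real.nat_sqrt_le_real_sqrt
          · exact log_sq_le_mul_sqrt (by exact_mod_cast (by lia : 1 ≤ N))
      _ = 16 * N := by rw [mul_left_comm, Real.mul_self_sqrt (by positivity)]
  have htail : ‖∑ n ∈ Ioc m N, (μ n : ℂ)‖ ≤ 32 * C * (N / Real.log N ^ 2) :=
    calc _ ≤ (Real.log (m + 1 : ℕ) ^ 4)⁻¹ * (2 * C * (N * Real.log N ^ 2)) :=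
          norm_sum_Ioc_moebius_le hC0 hC hm hmN
      _ ≤ ((Real.log N / 2) ^ 4)⁻¹ * (2 * C * (N * Real.log N ^ 2)) := by
          gcongr
          exact half_log_le_log_sqrt_add_one (by lia)
      _ = 32 * C * (N / Real.log N ^ 2) := by field_simp; ring
  have hsplit : mertensSum N = mertensSum m + ∑ n ∈ Ioc m N, μ n :=
    (sum_Ioc_consecutive _ m.zero_le hmN.le).symm
  rw [hsplit, add_mul]
  refine norm_add_le_of_le hhead (le_of_eq_of_le ?_ htail)
  rw [← Int.cast_sum, Complex.norm_intCast, Int.norm_eq_abs]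

lemma exists_norm_mertensSum_le :
    ∃ C, 0 ≤ C ∧ ∀ N : ℕ, ‖mertensSum N‖ ≤ C * (N / (1 + Real.log N) ^ 2) := by
  obtain ⟨C, hC0, hC⟩ := exists_norm_mertensSum_le_div_log_sq
  refine ⟨4 * C + 256, by positivity, fun N ↦ ?_⟩
  have : 0 ≤ Real.log N := Real.log_natCast_nonneg N
  rcases le_or_gt 16 N with hN | hN
  · have hL : 1 ≤ Real.log N := one_le_log_natCast (by lia)
    calc ‖mertensSum N‖ ≤ C * (N / Real.log N ^ 2) := hC N hN
      _ ≤ C * (N / ((1 + Real.log N) / 2) ^ 2) := by gcongr; linarith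
      _ = 4 * C * (N / (1 + Real.log N) ^ 2) := by field_simp; norm_num
      _ ≤ (4 * C + 256) * (N / (1 + Real.log N) ^ 2) := by gcongr; linarith
  · have hL : 1 + Real.log N ≤ 16 := by
      have hN16 : (N : ℝ) ≤ 15 := by exact_mod_cast Nat.le_of_lt_succ hN
      linarith [Real.log_le_self (Nat.cast_nonneg (α := ℝ) N)]
    calc ‖mertensSum N‖ ≤ N := norm_mertensSum_le N
      _ = 256 * (N / 16 ^ 2) := by ring
      _ ≤ (4 * C + 256) * (N / (1 + Real.log N) ^ 2) := by gcongr; linarith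

end Mertens

section Primes

open ArithmeticFunction
open scoped ArithmeticFunction.Omega

variable {N : ℕ} {σ η : ℝ}

lemma half_mul_div_le_natDiv {n : ℕ} (hn : 0 < n) (hnN : n ≤ N) :
    (N / 2 : ℝ) / n ≤ (N / n : ℕ) := by
  have hdiv : 1 ≤ N / n := (Nat.one_le_div_iff hn).2 hnN
  have hlt : N < n * (N / n + 1) := Nat.lt_mul_div_succ N hn
  rw [div_div, div_le_iff₀ (by positivity)]
  exact_mod_cast (by nlinarith : N ≤ N / n * (2 * n))

lemma sum_Ioc_log_le (N : ℕ) : ∑ n ∈ Ioc 0 N, Real.log n ≤ N * Real.log N := by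
  have hterm : ∀ n ∈ Ioc 0 N, Real.log n ≤ Real.log N := fun n hn ↦ by
    obtain ⟨hn0, hnN⟩ := mem_Ioc.1 hn
    exact Real.log_le_log (by exact_mod_cast hn0) (by exact_mod_cast hnN)
  simpa using sum_le_card_nsmul _ _ _ hterm

lemma sum_Ioc_vonMangoldt_div_le (N : ℕ) :
    ∑ n ∈ Ioc 0 N, Λ n / n ≤ 2 * Real.log N := by
  rcases N.eq_zero_or_pos with rfl | hN
  · simp
  have hlog : ∑ n ∈ Ioc 0 N, Λ n * (N / n : ℕ) = ∑ n ∈ Ioc 0 N, Real.log n := by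
    rw [← sum_Ioc_mul_zeta_eq_sum, vonMangoldt_mul_zeta]
    rfl
  have hhalf : N * (2⁻¹ * ∑ n ∈ Ioc 0 N, Λ n / n) ≤ N * Real.log N :=
    calc N * (2⁻¹ * ∑ n ∈ Ioc 0 N, Λ n / n) = ∑ n ∈ Ioc 0 N, Λ n * ((N / 2 : ℝ) / n) := by
          rw [← mul_assoc, mul_sum]
          exact sum_congr rfl fun n _ ↦ by ring
      _ ≤ ∑ n ∈ Ioc 0 N, Λ n * (N / n : ℕ) := by
          refine sum_le_sum fun n hn ↦ mul_le_mul_of_nonneg_left ?_ vonMangoldt_nonneg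
          exact half_mul_div_le_natDiv (mem_Ioc.1 hn).1 (mem_Ioc.1 hn).2
      _ ≤ N * Real.log N := hlog.trans_le (sum_Ioc_log_le N)
  linarith [le_of_mul_le_mul_left hhalf (by exact_mod_cast hN)]

lemma sum_primesLE_log_div_le (N : ℕ) :
    ∑ p ∈ N.primesLE, Real.log p / p ≤ 2 * Real.log N :=
  calc ∑ p ∈ N.primesLE, Real.log p / p = ∑ p ∈ N.primesLE, Λ p / p :=
        sum_congr rfl fun p hp ↦ by rw [vonMangoldt_apply_prime (Nat.prime_of_mem_primesLE hp)]
    _ ≤ ∑ n ∈ Ioc 0 N, Λ n / n := by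
        refine sum_le_sum_of_subset_of_nonneg (fun p hp ↦ ?_) fun n _ _ ↦
          div_nonneg vonMangoldt_nonneg n.cast_nonneg
        exact mem_Ioc.2 ⟨(Nat.prime_of_mem_primesLE hp).pos, Nat.le_of_mem_primesLE hp⟩
    _ ≤ 2 * Real.log N := sum_Ioc_vonMangoldt_div_le N

lemma exp_rpow_neg_le_norm_euler_factor (hσ : 0 < σ) {p : ℕ} (hp : p.Prime) :
    Real.exp ((p : ℝ) ^ (-σ)) ≤ ‖(1 - (p : ℂ) ^ (-σ : ℂ))⁻¹‖ := by
  have hlt : (p : ℝ) ^ (-σ) < 1 :=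
    Real.rpow_lt_one_of_one_lt_of_neg (by exact_mod_cast hp.one_lt) (neg_neg_of_pos hσ)
  have hreal : 1 - (p : ℂ) ^ (-σ : ℂ) = (1 - (p : ℝ) ^ (-σ) : ℝ) := by
    rw [Complex.ofReal_sub, Complex.ofReal_cpow p.cast_nonneg]
    push_cast
    rfl
  rw [hreal, norm_inv, Complex.norm_of_nonneg (sub_nonneg.2 hlt.le),
    ← inv_inv (Real.exp _), ← Real.exp_neg]
  exact inv_anti₀ (sub_pos.2 hlt) (Real.one_sub_le_exp_neg _)

lemma exp_sum_primesBelow_rpow_neg_le (hσ : 1 < σ) (N : ℕ) :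
    Real.exp (∑ p ∈ N.primesBelow, (p : ℝ) ^ (-σ)) ≤ ‖riemannZeta σ‖ := by
  refine ge_of_tendsto (riemannZeta_eulerProduct (s := σ) (by simpa using hσ)).norm ?_
  filter_upwards [Filter.eventually_ge_atTop N] with M hNM
  have hsubset : N.primesBelow ⊆ M.primesBelow :=
    filter_subset_filter _ (range_subset_range.2 hNM)
  calc Real.exp (∑ p ∈ N.primesBelow, (p : ℝ) ^ (-σ))
      ≤ Real.exp (∑ p ∈ M.primesBelow, (p : ℝ) ^ (-σ)) :=
        Real.exp_le_exp.2 (sum_le_sum_of_subset_of_nonneg hsubset fun p _ _ ↦ by positivity)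
    _ ≤ ‖∏ p ∈ M.primesBelow, (1 - (p : ℂ) ^ (-σ : ℂ))⁻¹‖ := by
        rw [Real.exp_sum, norm_prod]
        exact prod_le_prod (fun _ _ ↦ (Real.exp_pos _).le) fun p hp ↦
          exp_rpow_neg_le_norm_euler_factor (by linarith) (Nat.prime_of_mem_primesBelow hp)

lemma one_div_le_rpow_neg_add {t : ℝ} (ht : 0 < t) (η : ℝ) :
    1 / t ≤ t ^ (-(1 + η)) + η * (Real.log t / t) := by
  have hrpow : t ^ (-(1 + η)) = 1 / t * Real.exp (-(η * Real.log t)) := by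
    rw [neg_add, Real.rpow_add ht, Real.rpow_neg_one, one_div, Real.rpow_def_of_pos ht]
    ring_nf
  calc 1 / t = 1 / t * (1 - η * Real.log t) + η * (Real.log t / t) := by ring
    _ ≤ t ^ (-(1 + η)) + η * (Real.log t / t) := by
        rw [hrpow]; gcongr; exact Real.one_sub_le_exp_neg _

lemma exists_exp_sum_primesLE_one_div_le :
    ∃ C, 0 ≤ C ∧ ∀ N : ℕ, 3 ≤ N →
      Real.exp (∑ p ∈ N.primesLE, 1 / (p : ℝ)) ≤ C * Real.log N := by
  obtain ⟨C, hC, hzeta⟩ := exists_norm_riemannZeta_one_add_le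
  refine ⟨C * Real.exp 2, by positivity, fun N hN ↦ ?_⟩
  have hL : 1 ≤ Real.log N := one_le_log_natCast hN
  set η : ℝ := (Real.log N)⁻¹
  have hη : 0 < η := by positivity
  have hη2 : η ≤ 2 := (inv_le_one_of_one_le₀ hL).trans one_le_two
  have hshift : ∑ p ∈ N.primesLE, 1 / (p : ℝ) ≤
      ∑ p ∈ N.primesLE, (p : ℝ) ^ (-(1 + η)) + 2 :=
    calc ∑ p ∈ N.primesLE, 1 / (p : ℝ)
        ≤ ∑ p ∈ N.primesLE, ((p : ℝ) ^ (-(1 + η)) + η * (Real.log p / p)) :=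
          sum_le_sum fun p hp ↦
            one_div_le_rpow_neg_add (by exact_mod_cast (Nat.prime_of_mem_primesLE hp).pos) η
      _ = ∑ p ∈ N.primesLE, (p : ℝ) ^ (-(1 + η)) + η * ∑ p ∈ N.primesLE, Real.log p / p := by
          rw [sum_add_distrib, mul_sum]
      _ ≤ ∑ p ∈ N.primesLE, (p : ℝ) ^ (-(1 + η)) + η * (2 * Real.log N) := by
          gcongr; exact sum_primesLE_log_div_le N
      _ = ∑ p ∈ N.primesLE, (p : ℝ) ^ (-(1 + η)) + 2 := by
          rw [mul_left_comm, inv_mul_cancel₀ (by positivity), mul_one]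
  calc Real.exp (∑ p ∈ N.primesLE, 1 / (p : ℝ))
      ≤ Real.exp (∑ p ∈ N.primesLE, (p : ℝ) ^ (-(1 + η))) * Real.exp 2 := by
        rw [← Real.exp_add]; exact Real.exp_le_exp.2 hshift
    _ ≤ C / η * Real.exp 2 := by
        gcongr
        refine (exp_sum_primesBelow_rpow_neg_le (by linarith) (N + 1)).trans ?_
        simpa using hzeta η hη hη2
    _ = C * Real.exp 2 * Real.log N := by rw [div_inv_eq_mul]; ring

/-- The function supported on prime powers with value `k (k + 1) log p` at `p ^ k`: it dominates
`H (p ^ k) log (p ^ k)` for every `H` with `H (p ^ k) ≤ k + 1`. -/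
noncomputable def weightedVonMangoldt : ArithmeticFunction ℝ :=
  ⟨fun q ↦ Ω q * (Ω q + 1) * Λ q, by simp⟩

lemma weightedVonMangoldt_apply (q : ℕ) : weightedVonMangoldt q = Ω q * (Ω q + 1) * Λ q := rfl

lemma weightedVonMangoldt_nonneg (q : ℕ) : 0 ≤ weightedVonMangoldt q :=
  mul_nonneg (by positivity) vonMangoldt_nonneg

lemma weightedVonMangoldt_prime_pow {p : ℕ} (hp : p.Prime) (k : ℕ) :
    weightedVonMangoldt (p ^ k) = k * (k + 1) * Real.log p := by
  rcases eq_or_ne k 0 with rfl | hk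
  · simp [weightedVonMangoldt_apply]
  · rw [weightedVonMangoldt_apply, vonMangoldt_apply_pow hk, vonMangoldt_apply_prime hp,
      cardFactors_apply_prime_pow hp]

lemma two_pow_cardFactors_le {n : ℕ} (hn : n ≠ 0) : 2 ^ Ω n ≤ n :=
  calc 2 ^ Ω n ≤ n.primeFactorsList.prod :=
        List.pow_card_le_prod _ _ fun _ hp ↦ (Nat.prime_of_mem_primeFactorsList hp).two_le
    _ = n := Nat.prod_primeFactorsList hn

lemma cardFactors_le_two_mul_log {n : ℕ} (hn : n ≠ 0) : (Ω n : ℝ) ≤ 2 * Real.log n := by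
  have hlog : Ω n * Real.log 2 ≤ Real.log n := by
    rw [← Real.log_pow]
    exact Real.log_le_log (by positivity) (by exact_mod_cast two_pow_cardFactors_le hn)
  nlinarith [Real.log_two_gt_d9, Nat.cast_nonneg (α := ℝ) (Ω n)]

lemma weightedVonMangoldt_le {q : ℕ} (hq : 0 < q) (hqN : q ≤ N) :
    weightedVonMangoldt q ≤ 128 * √N * Λ q := by
  have hΩ : (Ω q : ℝ) ≤ 2 * Real.log N :=
    (cardFactors_le_two_mul_log hq.ne').trans (by gcongr)
  have hsq : (Ω q : ℝ) ≤ Ω q * Ω q := by exact_mod_cast Nat.le_mul_self _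
  have hN : (1 : ℝ) ≤ N := by exact_mod_cast hq.trans_le hqN
  refine mul_le_mul_of_nonneg_right ?_ vonMangoldt_nonneg
  calc (Ω q * (Ω q + 1) : ℝ) ≤ 2 * (Ω q) ^ 2 := by linarith
    _ ≤ 2 * (2 * Real.log N) ^ 2 := by gcongr
    _ = 8 * Real.log N ^ 2 := by ring
    _ ≤ 128 * √N := by linarith [log_sq_le_mul_sqrt hN]

lemma sum_primesLE_weightedVonMangoldt_le (N : ℕ) :
    ∑ p ∈ Ioc 0 N with p.Prime, weightedVonMangoldt p ≤ 2 * Real.log 4 * N :=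
  calc ∑ p ∈ Ioc 0 N with p.Prime, weightedVonMangoldt p = 2 * Chebyshev.theta N := by
        rw [Chebyshev.theta, Nat.floor_natCast, mul_sum]
        refine sum_congr rfl fun p hp ↦ ?_
        simpa [one_add_one_eq_two] using weightedVonMangoldt_prime_pow (mem_filter.1 hp).2 1
    _ ≤ 2 * Real.log 4 * N := by linarith [Chebyshev.theta_le_log4_mul_x N.cast_nonneg]

lemma exists_sum_weightedVonMangoldt_le :
    ∃ C, 0 ≤ C ∧ ∀ N : ℕ, ∑ q ∈ Ioc 0 N, weightedVonMangoldt q ≤ C * N := by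
  obtain ⟨D, hD⟩ := Chebyshev.psi_sub_theta_le_mul_sqrt
  have hD0 : 0 ≤ D := by simpa using hD 1
  refine ⟨2 * Real.log 4 + 128 * D, by positivity, fun N ↦ ?_⟩
  have hnonprime : ∑ q ∈ Ioc 0 N with ¬ q.Prime, weightedVonMangoldt q ≤ 128 * D * N :=
    calc ∑ q ∈ Ioc 0 N with ¬ q.Prime, weightedVonMangoldt q
        ≤ ∑ q ∈ Ioc 0 N with ¬ q.Prime, 128 * √N * Λ q := by
          refine sum_le_sum fun q hq ↦ ?_
          obtain ⟨hq0, hqN⟩ := mem_Ioc.1 (mem_filter.1 hq).1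
          exact weightedVonMangoldt_le hq0 hqN
      _ = 128 * √N * (Chebyshev.psi N - Chebyshev.theta N) := by
          rw [Chebyshev.psi_sub_theta_eq_sum_not_prime, Nat.floor_natCast, mul_sum]
      _ ≤ 128 * √N * (D * √N) := by gcongr; exact hD N
      _ = 128 * D * N := by linear_combination 128 * D * Real.mul_self_sqrt N.cast_nonneg
  rw [← sum_filter_add_sum_filter_not (Ioc 0 N) Nat.Prime, add_mul]
  exact add_le_add (sum_primesLE_weightedVonMangoldt_le N) hnonprime

end Primes

section Weight

variable {N d : ℕ}

/-- The weight `n ↦ 1 / (1 + log n) ^ 2`, set to `0` at `n = 0`. Up to constants its summatory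
function is `N / (1 + log N) ^ 2`, the size of our bound for the Mertens function; being additive,
it can be rearranged by Dirichlet convolution. -/
noncomputable def logWeight : ArithmeticFunction ℝ :=
  ⟨fun n ↦ if n = 0 then 0 else ((1 + Real.log n) ^ 2)⁻¹, if_pos rfl⟩

lemma logWeight_apply {n : ℕ} (hn : 0 < n) : logWeight n = ((1 + Real.log n) ^ 2)⁻¹ :=
  if_neg hn.ne'

lemma logWeight_nonneg (n : ℕ) : 0 ≤ logWeight n := by
  rcases n.eq_zero_or_pos with rfl | hn
  · simp
  · rw [logWeight_apply hn]; positivity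

lemma logWeight_mul_one_add_log_le (n : ℕ) : logWeight n * (1 + Real.log n) ≤ 1 := by
  rcases n.eq_zero_or_pos with rfl | hn
  · simp
  · have hlog : 0 ≤ Real.log n := Real.log_natCast_nonneg n
    rw [logWeight_apply hn, inv_mul_le_one₀ (by positivity)]
    nlinarith

lemma logWeight_le_one (n : ℕ) : logWeight n ≤ 1 := by
  nlinarith [logWeight_mul_one_add_log_le n, logWeight_nonneg n, Real.log_natCast_nonneg n]

lemma div_one_add_log_sq_le_sum_logWeight (N : ℕ) :
    N / (1 + Real.log N) ^ 2 ≤ ∑ k ∈ Ioc 0 N, logWeight k := by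
  have hterm : ∀ k ∈ Ioc 0 N, ((1 + Real.log N) ^ 2)⁻¹ ≤ logWeight k := fun k hk ↦ by
    obtain ⟨hk0, hkN⟩ := mem_Ioc.1 hk
    have : 0 ≤ Real.log k := Real.log_natCast_nonneg k
    rw [logWeight_apply hk0]
    gcongr
  simpa [div_eq_mul_inv] using card_nsmul_le_sum _ _ _ hterm

lemma one_div_succ_le_log_succ_sub_log (hN : 0 < N) :
    1 / (N + 1 : ℝ) ≤ Real.log (N + 1) - Real.log N := by
  have hN' : (0 : ℝ) < N := by exact_mod_cast hN
  rw [← Real.log_div (by positivity) hN'.ne']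
  refine le_trans (le_of_eq ?_) (Real.one_sub_inv_le_log_of_pos (by positivity))
  field_simp
  ring

lemma logWeight_succ_div_le (hN : 0 < N) :
    logWeight (N + 1) / (N + 1 : ℕ) ≤
      1 / (1 + Real.log N) - 1 / (1 + Real.log (N + 1 : ℕ)) := by
  rw [logWeight_apply N.succ_pos]
  push_cast
  set a := 1 + Real.log N
  set b := 1 + Real.log (N + 1)
  have hstep : 1 / (N + 1 : ℝ) ≤ b - a := by
    linarith [one_div_succ_le_log_succ_sub_log hN]
  have ha0 : 0 < a := by linarith [Real.log_natCast_nonneg N]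
  have hab : a ≤ b := by linarith [show 0 ≤ 1 / (N + 1 : ℝ) by positivity]
  have hb0 : 0 < b := ha0.trans_le hab
  calc (b ^ 2)⁻¹ / (N + 1) = 1 / (N + 1) / (b * b) := by ring
    _ ≤ (b - a) / (a * b) := by gcongr
    _ = 1 / a - 1 / b := by field_simp

lemma sum_logWeight_div_le (N : ℕ) : ∑ k ∈ Ioc 0 N, logWeight k / k ≤ 2 := by
  rcases N.eq_zero_or_pos with rfl | hN
  · simp
  suffices ∑ k ∈ Ioc 0 N, logWeight k / k ≤ 2 - 1 / (1 + Real.log N) by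
    linarith [show 0 ≤ 1 / (1 + Real.log N) by
      have := Real.log_natCast_nonneg N; positivity]
  induction N, hN using Nat.le_induction with
  | base => norm_num [logWeight_apply]
  | succ N hN ih =>
    rw [sum_Ioc_succ_top N.zero_le]
    linarith [logWeight_succ_div_le hN]

lemma sum_log_sub_log_le (N : ℕ) : ∑ k ∈ Ioc 0 N, (Real.log N - Real.log k) ≤ N := by
  rcases N.eq_zero_or_pos with rfl | hN
  · simp
  have hN' : (0 : ℝ) < N := by exact_mod_cast hN
  have hfact : ∑ k ∈ Ioc 0 N, Real.log k = Real.log (N.factorial : ℝ) := by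
    rw [← Real.log_prod fun k hk ↦ by exact_mod_cast (mem_Ioc.1 hk).1.ne',
      ← prod_Ico_id_eq_factorial, Nat.cast_prod]
    rfl
  calc ∑ k ∈ Ioc 0 N, (Real.log N - Real.log k)
      = Real.log ((N : ℝ) ^ N / N.factorial) := by
        rw [sum_sub_distrib, hfact, Real.log_div (by positivity) (by positivity), Real.log_pow]
        simp
    _ ≤ Real.log (Real.exp N) :=
        Real.log_le_log (by positivity) (Real.pow_div_factorial_le_exp _ hN'.le N)
    _ = N := Real.log_exp _

lemma sum_logWeight_mul_one_add_log_le (N : ℕ) :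
    (∑ k ∈ Ioc 0 N, logWeight k) * (1 + Real.log N) ≤ 2 * N := by
  have hterm : ∀ k ∈ Ioc 0 N,
      logWeight k * (1 + Real.log N) ≤ 1 + (Real.log N - Real.log k) := fun k hk ↦ by
    obtain ⟨hk0, hkN⟩ := mem_Ioc.1 hk
    have hlog : Real.log k ≤ Real.log N := by gcongr
    calc logWeight k * (1 + Real.log N)
        = logWeight k * (1 + Real.log k) + logWeight k * (Real.log N - Real.log k) := by ring
      _ ≤ 1 + 1 * (Real.log N - Real.log k) :=
          add_le_add (logWeight_mul_one_add_log_le k)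
            (mul_le_mul_of_nonneg_right (logWeight_le_one k) (sub_nonneg.2 hlog))
      _ = 1 + (Real.log N - Real.log k) := by rw [one_mul]
  calc (∑ k ∈ Ioc 0 N, logWeight k) * (1 + Real.log N)
      ≤ ∑ k ∈ Ioc 0 N, (1 + (Real.log N - Real.log k)) := by
        rw [sum_mul]; exact sum_le_sum hterm
    _ = N + ∑ k ∈ Ioc 0 N, (Real.log N - Real.log k) := by rw [sum_add_distrib]; simp
    _ ≤ 2 * N := by linarith [sum_log_sub_log_le N]

lemma log_sub_log_le_one_add_log_div (hd : 0 < d) (hdN : d ≤ N) :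
    Real.log N - Real.log d ≤ 1 + Real.log (N / d : ℕ) := by
  have hd' : (0 : ℝ) < d := by exact_mod_cast hd
  have hN : (0 : ℝ) < N := by exact_mod_cast hd.trans_le hdN
  have hq : (0 : ℝ) < (N / d : ℕ) := by exact_mod_cast Nat.div_pos hdN hd
  have hle : (N / d : ℝ) ≤ 2 * (N / d : ℕ) := by
    linarith [half_mul_div_le_natDiv hd hdN, show (N / 2 : ℝ) / d = N / d / 2 by ring]
  calc Real.log N - Real.log d = Real.log (N / d) := (Real.log_div hN.ne' hd'.ne').symm
    _ ≤ Real.log (2 * (N / d : ℕ)) := Real.log_le_log (by positivity) hle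
    _ = Real.log 2 + Real.log (N / d : ℕ) := Real.log_mul two_ne_zero hq.ne'
    _ ≤ 1 + Real.log (N / d : ℕ) := by linarith [Real.log_two_lt_d9]

lemma sum_logWeight_mul_log_sub_log_le (hd : 0 < d) (hdN : d ≤ N) :
    (∑ k ∈ Ioc 0 (N / d), logWeight k) * (Real.log N - Real.log d) ≤ 2 * (N / d) :=
  calc (∑ k ∈ Ioc 0 (N / d), logWeight k) * (Real.log N - Real.log d)
      ≤ (∑ k ∈ Ioc 0 (N / d), logWeight k) * (1 + Real.log (N / d : ℕ)) :=
        mul_le_mul_of_nonneg_left (log_sub_log_le_one_add_log_div hd hdN)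
          (sum_nonneg fun k _ ↦ logWeight_nonneg k)
    _ ≤ 2 * (N / d : ℕ) := sum_logWeight_mul_one_add_log_le _
    _ ≤ 2 * (N / d) := by gcongr; exact Nat.cast_div_le

end Weight

section Convolution

open ArithmeticFunction

lemma sum_Ioc_mul_le {g h : ArithmeticFunction ℝ} {C : ℝ} (hg : ∀ n, 0 ≤ g n)
    (hC : 0 ≤ C) (hh : ∀ N : ℕ, ∑ n ∈ Ioc 0 N, h n ≤ C * N) (N : ℕ) :
    ∑ n ∈ Ioc 0 N, (g * h) n ≤ C * N * ∑ n ∈ Ioc 0 N, g n / n := by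
  rw [sum_Ioc_mul_eq_sum_sum, mul_sum]
  refine sum_le_sum fun k _ ↦ ?_
  calc g k * ∑ n ∈ Ioc 0 (N / k), h n ≤ g k * (C * (N / k : ℕ)) :=
        mul_le_mul_of_nonneg_left (hh _) (hg k)
    _ ≤ g k * (C * (N / k)) := by
        have := hg k
        gcongr
        exact Nat.cast_div_le
    _ = C * N * (g k / k) := by ring

lemma sum_primeFactors_ordProj_le {F : ℕ × ℕ → ℝ} (hF : ∀ x, 0 ≤ F x) {n : ℕ} (hn : n ≠ 0) :
    ∑ p ∈ n.primeFactors, F (ordProj[p] n, ordCompl[p] n) ≤ ∑ x ∈ n.divisorsAntidiagonal, F x := by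
  have hinj : Set.InjOn (fun p ↦ (ordProj[p] n, ordCompl[p] n)) (n.primeFactors : Set ℕ) := by
    intro p hp q hq hpq
    have hminFac : ∀ r ∈ n.primeFactors, (ordProj[r] n).minFac = r := fun r hr ↦
      (Nat.prime_of_mem_primeFactors hr).pow_minFac (Finsupp.mem_support_iff.1 hr)
    rw [← hminFac p hp, ← hminFac q hq, (Prod.mk.inj hpq).1]
  rw [← sum_image hinj]
  refine sum_le_sum_of_subset_of_nonneg (image_subset_iff.2 fun p _ ↦ ?_) fun x _ _ ↦ hF x
  exact Nat.mem_divisorsAntidiagonal.2 ⟨Nat.ordProj_mul_ordCompl_eq_self n p, hn⟩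

variable {H : ArithmeticFunction ℝ}

lemma mul_log_le_weightedVonMangoldt_mul (hH : H.IsMultiplicative) (hnonneg : ∀ n, 0 ≤ H n)
    (hprimePow : ∀ p k : ℕ, p.Prime → H (p ^ k) ≤ k + 1) {n : ℕ} (hn : n ≠ 0) :
    H n * Real.log n ≤ (weightedVonMangoldt * H) n := by
  have hterm : ∀ p ∈ n.primeFactors, H n * (n.factorization p * Real.log p) ≤
      weightedVonMangoldt (ordProj[p] n) * H (ordCompl[p] n) := fun p hp ↦ by
    have hpp : p.Prime := Nat.prime_of_mem_primeFactors hp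
    have hfactor : H n = H (ordProj[p] n) * H (ordCompl[p] n) := by
      rw [← hH.map_mul_of_coprime ((Nat.coprime_ordCompl hpp hn).pow_left _),
        Nat.ordProj_mul_ordCompl_eq_self]
    have hle := hprimePow p (n.factorization p) hpp
    have hcompl := hnonneg (ordCompl[p] n)
    have : 0 ≤ Real.log p := Real.log_natCast_nonneg p
    calc H n * (n.factorization p * Real.log p)
        = H (ordProj[p] n) * (H (ordCompl[p] n) * (n.factorization p * Real.log p)) := by
          rw [hfactor, mul_assoc]
      _ ≤ (n.factorization p + 1) * (H (ordCompl[p] n) * (n.factorization p * Real.log p)) := by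
          gcongr
      _ = weightedVonMangoldt (ordProj[p] n) * H (ordCompl[p] n) := by
          rw [weightedVonMangoldt_prime_pow hpp]; ring
  calc H n * Real.log n = ∑ p ∈ n.primeFactors, H n * (n.factorization p * Real.log p) := by
        rw [Real.log_nat_eq_sum_factorization, Finsupp.sum, mul_sum, Nat.support_factorization]
    _ ≤ ∑ p ∈ n.primeFactors, weightedVonMangoldt (ordProj[p] n) * H (ordCompl[p] n) :=
        sum_le_sum hterm
    _ ≤ (weightedVonMangoldt * H) n := by
        rw [mul_apply]
        exact sum_primeFactors_ordProj_le (F := fun x ↦ weightedVonMangoldt x.1 * H x.2)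
          (fun x ↦ mul_nonneg (weightedVonMangoldt_nonneg _) (hnonneg _)) hn

lemma exists_sum_logWeight_mul_weightedVonMangoldt_le :
    ∃ C, 0 ≤ C ∧ ∀ N : ℕ, ∑ n ∈ Ioc 0 N, (logWeight * weightedVonMangoldt) n ≤ C * N := by
  obtain ⟨C, hC, hsum⟩ := exists_sum_weightedVonMangoldt_le
  refine ⟨C * 2, by positivity, fun N ↦ ?_⟩
  calc ∑ n ∈ Ioc 0 N, (logWeight * weightedVonMangoldt) n
      ≤ C * N * ∑ n ∈ Ioc 0 N, logWeight n / n := sum_Ioc_mul_le logWeight_nonneg hC hsum N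
    _ ≤ C * N * 2 := by gcongr; exact sum_logWeight_div_le N
    _ = C * 2 * N := by ring

lemma exists_sum_mul_logWeight_mul_log_le :
    ∃ C, 0 ≤ C ∧ ∀ H : ArithmeticFunction ℝ, H.IsMultiplicative → (∀ n, 0 ≤ H n) →
      (∀ p k : ℕ, p.Prime → H (p ^ k) ≤ k + 1) → ∀ N : ℕ,
      (∑ n ∈ Ioc 0 N, (H * logWeight) n) * Real.log N ≤ C * N * ∑ d ∈ Ioc 0 N, H d / d := by
  obtain ⟨C, hC, hsum⟩ := exists_sum_logWeight_mul_weightedVonMangoldt_le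
  refine ⟨C + 2, by positivity, fun H hH hnonneg hprimePow N ↦ ?_⟩
  let V (M : ℕ) : ℝ := ∑ k ∈ Ioc 0 M, logWeight k
  have hlog : ∑ d ∈ Ioc 0 N, H d * Real.log d * V (N / d) ≤ C * N * ∑ d ∈ Ioc 0 N, H d / d :=
    calc ∑ d ∈ Ioc 0 N, H d * Real.log d * V (N / d)
        ≤ ∑ d ∈ Ioc 0 N, (weightedVonMangoldt * H) d * V (N / d) :=
          sum_le_sum fun d hd ↦ mul_le_mul_of_nonneg_right
            (mul_log_le_weightedVonMangoldt_mul hH hnonneg hprimePow (mem_Ioc.1 hd).1.ne')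
            (sum_nonneg fun k _ ↦ logWeight_nonneg k)
      _ = ∑ n ∈ Ioc 0 N, (H * (logWeight * weightedVonMangoldt)) n := by
          rw [← sum_Ioc_mul_eq_sum_sum, mul_comm weightedVonMangoldt, mul_assoc,
            mul_comm weightedVonMangoldt]
      _ ≤ C * N * ∑ d ∈ Ioc 0 N, H d / d := sum_Ioc_mul_le hnonneg hC hsum N
  have hcolog : ∑ d ∈ Ioc 0 N, H d * (V (N / d) * (Real.log N - Real.log d)) ≤
      2 * N * ∑ d ∈ Ioc 0 N, H d / d := by
    rw [mul_sum]
    refine sum_le_sum fun d hd ↦ ?_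
    obtain ⟨hd0, hdN⟩ := mem_Ioc.1 hd
    calc H d * (V (N / d) * (Real.log N - Real.log d)) ≤ H d * (2 * (N / d)) :=
          mul_le_mul_of_nonneg_left (sum_logWeight_mul_log_sub_log_le hd0 hdN) (hnonneg d)
      _ = 2 * N * (H d / d) := by ring
  calc (∑ n ∈ Ioc 0 N, (H * logWeight) n) * Real.log N
      = ∑ d ∈ Ioc 0 N, H d * Real.log d * V (N / d) +
          ∑ d ∈ Ioc 0 N, H d * (V (N / d) * (Real.log N - Real.log d)) := by
        rw [sum_Ioc_mul_eq_sum_sum, sum_mul, ← sum_add_distrib]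
        exact sum_congr rfl fun d _ ↦ by ring
    _ ≤ (C + 2) * N * ∑ d ∈ Ioc 0 N, H d / d := by linarith

end Convolution

section EulerProduct

open ArithmeticFunction

variable {a : ℕ → ℝ} {t : ℝ}

lemma hasSum_add_three_mul_half_pow :
    HasSum (fun k : ℕ ↦ ((k : ℝ) + 3) * (1 / 2) ^ k) 8 := by
  have hlin := hasSum_coe_mul_geometric_of_norm_lt_one (r := (1 / 2 : ℝ)) (by norm_num)
  have hvalue : (8 : ℝ) = 1 / 2 / (1 - 1 / 2) ^ 2 + 3 * 2 := by norm_num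
  simpa only [hvalue, add_mul] using hlin.add (hasSum_geometric_two.mul_left 3)

lemma div_pow_add_two_le (ht : 2 ≤ t) (ha : ∀ k, a k ≤ k + 1) (k : ℕ) :
    a (k + 2) / t ^ (k + 2) ≤ 1 / t ^ 2 * ((k + 3) * (1 / 2) ^ k) := by
  have ha2 : a (k + 2) ≤ k + 3 := by
    have := ha (k + 2)
    push_cast at this
    linarith
  calc a (k + 2) / t ^ (k + 2) ≤ (k + 3) / t ^ (k + 2) := by gcongr
    _ = 1 / t ^ 2 * ((k + 3) * (1 / t) ^ k) := by
        rw [one_div_pow, pow_add]; field_simp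
    _ ≤ 1 / t ^ 2 * ((k + 3) * (1 / 2) ^ k) := by gcongr

lemma summable_div_pow (ht : 2 ≤ t) (hnonneg : ∀ k, 0 ≤ a k) (ha : ∀ k, a k ≤ k + 1) :
    Summable fun k : ℕ ↦ a k / t ^ k :=
  (summable_nat_add_iff 2).1 <| Summable.of_nonneg_of_le
    (fun _ ↦ div_nonneg (hnonneg _) (by positivity)) (div_pow_add_two_le ht ha)
    (hasSum_add_three_mul_half_pow.summable.mul_left _)

lemma tsum_div_pow_le (ht : 2 ≤ t) (hone : a 0 = 1) (hnonneg : ∀ k, 0 ≤ a k)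
    (ha : ∀ k, a k ≤ k + 1) :
    ∑' k : ℕ, a k / t ^ k ≤ Real.exp (a 1 / t + 8 * (1 / t ^ 2)) := by
  have hsummable := summable_div_pow ht hnonneg ha
  have htail : ∑' k : ℕ, a (k + 2) / t ^ (k + 2) ≤ 1 / t ^ 2 * 8 :=
    hasSum_le (div_pow_add_two_le ht ha) ((summable_nat_add_iff 2).2 hsummable).hasSum
      (hasSum_add_three_mul_half_pow.mul_left _)
  calc ∑' k : ℕ, a k / t ^ k = 1 + a 1 / t + ∑' k : ℕ, a (k + 2) / t ^ (k + 2) := by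
        rw [← hsummable.sum_add_tsum_nat_add 2]
        simp [sum_range_succ, hone]
    _ ≤ a 1 / t + 8 * (1 / t ^ 2) + 1 := by linarith
    _ ≤ Real.exp (a 1 / t + 8 * (1 / t ^ 2)) := Real.add_one_le_exp _

lemma sum_Ioc_le_prod_primesLE_tsum {g : ℕ → ℝ} (hone : g 1 = 1)
    (hmul : ∀ {m n : ℕ}, m.Coprime n → g (m * n) = g m * g n) (hnonneg : ∀ n, 0 ≤ g n)
    (hsum : ∀ {p : ℕ}, p.Prime → Summable fun k : ℕ ↦ g (p ^ k)) (N : ℕ) :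
    ∑ n ∈ Ioc 0 N, g n ≤ ∏ p ∈ N.primesLE, ∑' k : ℕ, g (p ^ k) := by
  have hEuler := (EulerProduct.summable_and_hasSum_smoothNumbers_prod_primesBelow_tsum hone hmul
    (fun hp ↦ (hsum hp).norm) (N + 1)).2
  have hsmooth : ∀ n ∈ Ioc 0 N, n ∈ (N + 1).smoothNumbers := fun n hn ↦
    Nat.mem_smoothNumbers_of_lt (mem_Ioc.1 hn).1 (Nat.lt_succ_of_le (mem_Ioc.1 hn).2)
  calc ∑ n ∈ Ioc 0 N, g n
      = ∑ n ∈ (Ioc 0 N).subtype (· ∈ (N + 1).smoothNumbers), g n := by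
        rw [sum_subtype_eq_sum_filter, filter_true_of_mem hsmooth]
    _ ≤ ∏ p ∈ N.primesLE, ∑' k : ℕ, g (p ^ k) := sum_le_hasSum _ (fun n _ ↦ hnonneg n) hEuler

lemma exists_sum_div_le_exp_sum_primesLE :
    ∃ C, 0 ≤ C ∧ ∀ H : ArithmeticFunction ℝ, H.IsMultiplicative → (∀ n, 0 ≤ H n) →
      (∀ p k : ℕ, p.Prime → H (p ^ k) ≤ k + 1) → ∀ N : ℕ,
      ∑ d ∈ Ioc 0 N, H d / d ≤ C * Real.exp (∑ p ∈ N.primesLE, H p / p) := by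
  refine ⟨Real.exp (8 * ∑' n : ℕ, 1 / (n : ℝ) ^ 2), by positivity,
    fun H hH hnonneg hprimePow N ↦ ?_⟩
  have hp2 : ∀ {p : ℕ}, p.Prime → (2 : ℝ) ≤ p := fun hp ↦ by exact_mod_cast hp.two_le
  have hsquares : ∑ p ∈ N.primesLE, 1 / (p : ℝ) ^ 2 ≤ ∑' n : ℕ, 1 / (n : ℝ) ^ 2 :=
    (Real.summable_one_div_nat_pow.2 one_lt_two).sum_le_tsum _ fun n _ ↦ by positivity
  calc ∑ d ∈ Ioc 0 N, H d / d
      ≤ ∏ p ∈ N.primesLE, ∑' k : ℕ, H (p ^ k) / ((p ^ k : ℕ) : ℝ) :=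
        sum_Ioc_le_prod_primesLE_tsum (g := fun n ↦ H n / n) (by simp [hH.map_one])
          (fun hmn ↦ by
            rw [hH.map_mul_of_coprime hmn, Nat.cast_mul, mul_div_mul_comm])
          (fun n ↦ div_nonneg (hnonneg n) n.cast_nonneg)
          (fun {p} hp ↦ by
            simpa only [Nat.cast_pow] using
              summable_div_pow (hp2 hp) (fun k ↦ hnonneg (p ^ k)) fun k ↦ hprimePow p k hp) N
    _ ≤ ∏ p ∈ N.primesLE, Real.exp (H p / p + 8 * (1 / (p : ℝ) ^ 2)) := by
        refine prod_le_prod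
          (fun p _ ↦ tsum_nonneg fun k ↦ div_nonneg (hnonneg _) (Nat.cast_nonneg _)) fun p hp ↦ ?_
        have hpp := Nat.prime_of_mem_primesLE hp
        simpa using tsum_div_pow_le (a := fun k ↦ H (p ^ k)) (hp2 hpp) (by simp [hH.map_one])
          (fun k ↦ hnonneg (p ^ k)) fun k ↦ hprimePow p k hpp
    _ = Real.exp (8 * ∑ p ∈ N.primesLE, 1 / (p : ℝ) ^ 2) *
          Real.exp (∑ p ∈ N.primesLE, H p / p) := by
        rw [← Real.exp_sum, sum_add_distrib, ← mul_sum, add_comm, Real.exp_add]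
    _ ≤ Real.exp (8 * ∑' n : ℕ, 1 / (n : ℝ) ^ 2) * Real.exp (∑ p ∈ N.primesLE, H p / p) := by
        gcongr

end EulerProduct

section MeanValue

open ArithmeticFunction
open scoped ArithmeticFunction.zeta ArithmeticFunction.Moebius

variable {𝕜 : Type*} [RCLike 𝕜] {f : ArithmeticFunction 𝕜}

/-- The arithmetic function `|f * 1|`, the convolution `f * 1` being the factor that `f` keeps
once a Möbius function is split off. -/
noncomputable def normMulZeta (f : ArithmeticFunction 𝕜) : ArithmeticFunction ℝ :=
  ⟨fun n ↦ ‖(f * ζ) n‖, by simp⟩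

lemma normMulZeta_apply (f : ArithmeticFunction 𝕜) (n : ℕ) : normMulZeta f n = ‖(f * ζ) n‖ := rfl

lemma normMulZeta_nonneg (f : ArithmeticFunction 𝕜) (n : ℕ) : 0 ≤ normMulZeta f n :=
  norm_nonneg ((f * ζ) n)

lemma isMultiplicative_normMulZeta (hf : f.IsMultiplicative) :
    (normMulZeta f).IsMultiplicative := by
  have hmul : (f * ζ).IsMultiplicative := hf.mul isMultiplicative_zeta.natCast
  refine ⟨by rw [normMulZeta_apply, hmul.map_one, norm_one], fun hmn ↦ ?_⟩
  simp only [normMulZeta_apply, hmul.map_mul_of_coprime hmn, norm_mul]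

lemma normMulZeta_prime (hf : f 1 = 1) {p : ℕ} (hp : p.Prime) :
    normMulZeta f p = ‖1 + f p‖ := by
  rw [normMulZeta_apply, coe_mul_zeta_apply, hp.sum_divisors, hf, add_comm]

lemma normMulZeta_prime_pow_le (hf : ∀ n, ‖f n‖ ≤ 1) {p : ℕ} (hp : p.Prime) (k : ℕ) :
    normMulZeta f (p ^ k) ≤ k + 1 := by
  rw [normMulZeta_apply, coe_mul_zeta_apply, Nat.sum_divisors_prime_pow hp]
  simpa using norm_sum_le_of_le (range (k + 1)) fun i _ ↦ hf (p ^ i)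

lemma sum_Ioc_eq_sum_mul_mertensSum (f : ArithmeticFunction 𝕜) (N : ℕ) :
    ∑ n ∈ Ioc 0 N, f n = ∑ d ∈ Ioc 0 N, (f * ζ) d * (mertensSum (N / d) : 𝕜) := by
  have hsplit : f = f * ζ * μ := by rw [mul_assoc, coe_zeta_mul_coe_moebius, mul_one]
  conv_lhs => rw [hsplit]
  rw [sum_Ioc_mul_eq_sum_sum]
  simp only [mertensSum, intCoe_apply, Int.cast_sum]

lemma exists_norm_sum_Ioc_le_sum_normMulZeta :
    ∃ C, 0 ≤ C ∧ ∀ (f : ArithmeticFunction 𝕜) (N : ℕ),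
      ‖∑ n ∈ Ioc 0 N, f n‖ ≤ C * ∑ n ∈ Ioc 0 N, (normMulZeta f * logWeight) n := by
  obtain ⟨C, hC, hmertens⟩ := exists_norm_mertensSum_le
  refine ⟨C, hC, fun f N ↦ ?_⟩
  have hV : ∀ M : ℕ, ‖(mertensSum M : 𝕜)‖ ≤ C * ∑ k ∈ Ioc 0 M, logWeight k := fun M ↦
    calc ‖(mertensSum M : 𝕜)‖ = ‖mertensSum M‖ := by
          rw [norm_intCast_eq_abs_mul_norm_one, norm_one, mul_one, Int.norm_eq_abs, Int.cast_abs]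
      _ ≤ C * (M / (1 + Real.log M) ^ 2) := hmertens M
      _ ≤ C * ∑ k ∈ Ioc 0 M, logWeight k := by
          gcongr; exact div_one_add_log_sq_le_sum_logWeight M
  rw [sum_Ioc_eq_sum_mul_mertensSum, sum_Ioc_mul_eq_sum_sum, mul_sum]
  refine norm_sum_le_of_le _ fun d _ ↦ ?_
  calc ‖(f * ζ) d * (mertensSum (N / d) : 𝕜)‖
      ≤ normMulZeta f d * (C * ∑ k ∈ Ioc 0 (N / d), logWeight k) := by
        rw [norm_mul]; exact mul_le_mul_of_nonneg_left (hV _) (norm_nonneg _)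
    _ = C * (normMulZeta f d * ∑ k ∈ Ioc 0 (N / d), logWeight k) := mul_left_comm _ _ _

lemma exists_norm_sum_Ioc_mul_log_le :
    ∃ C, 0 ≤ C ∧ ∀ f : ArithmeticFunction 𝕜, f.IsMultiplicative → (∀ n, ‖f n‖ ≤ 1) → ∀ N : ℕ,
      ‖∑ n ∈ Ioc 0 N, f n‖ * Real.log N ≤
        C * N * Real.exp (∑ p ∈ N.primesLE, ‖1 + f p‖ / p) := by
  obtain ⟨C₁, hC₁, hconv⟩ := exists_norm_sum_Ioc_le_sum_normMulZeta (𝕜 := 𝕜)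
  obtain ⟨C₂, hC₂, hlog⟩ := exists_sum_mul_logWeight_mul_log_le
  obtain ⟨C₃, hC₃, hEuler⟩ := exists_sum_div_le_exp_sum_primesLE
  refine ⟨C₁ * C₂ * C₃, by positivity, fun f hf hbound N ↦ ?_⟩
  have hH := isMultiplicative_normMulZeta hf
  have hprimePow : ∀ p k : ℕ, p.Prime → normMulZeta f (p ^ k) ≤ k + 1 :=
    fun _ k hp ↦ normMulZeta_prime_pow_le hbound hp k
  have hprimes : ∑ p ∈ N.primesLE, normMulZeta f p / p = ∑ p ∈ N.primesLE, ‖1 + f p‖ / p :=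
    sum_congr rfl fun p hp ↦ by
      rw [normMulZeta_prime hf.map_one (Nat.prime_of_mem_primesLE hp)]
  calc ‖∑ n ∈ Ioc 0 N, f n‖ * Real.log N
      ≤ C₁ * (∑ n ∈ Ioc 0 N, (normMulZeta f * logWeight) n) * Real.log N :=
        mul_le_mul_of_nonneg_right (hconv f N) (Real.log_natCast_nonneg N)
    _ = C₁ * ((∑ n ∈ Ioc 0 N, (normMulZeta f * logWeight) n) * Real.log N) := mul_assoc _ _ _
    _ ≤ C₁ * (C₂ * N * ∑ d ∈ Ioc 0 N, normMulZeta f d / d) := by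
        exact mul_le_mul_of_nonneg_left (hlog _ hH (normMulZeta_nonneg f) hprimePow N) hC₁
    _ ≤ C₁ * (C₂ * N * (C₃ * Real.exp (∑ p ∈ N.primesLE, normMulZeta f p / p))) := by
        gcongr; exact hEuler _ hH (normMulZeta_nonneg f) hprimePow N
    _ = C₁ * C₂ * C₃ * N * Real.exp (∑ p ∈ N.primesLE, ‖1 + f p‖ / p) := by rw [hprimes]; ring

lemma exists_norm_sum_Ioc_le_mul_exp :
    ∃ C, 0 ≤ C ∧ ∀ f : ArithmeticFunction 𝕜, f.IsMultiplicative → (∀ n, ‖f n‖ ≤ 1) →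
      ∀ N : ℕ, 3 ≤ N →
      ‖∑ n ∈ Ioc 0 N, f n‖ ≤ C * N * Real.exp (∑ p ∈ N.primesLE, (‖1 + f p‖ - 1) / p) := by
  obtain ⟨C₁, hC₁, hlog⟩ := exists_norm_sum_Ioc_mul_log_le (𝕜 := 𝕜)
  obtain ⟨C₂, hC₂, hMertens⟩ := exists_exp_sum_primesLE_one_div_le
  refine ⟨C₁ * C₂, by positivity, fun f hf hbound N hN ↦ ?_⟩
  have hlogN : 0 < Real.log N := zero_lt_one.trans_le (one_le_log_natCast hN)
  refine le_of_mul_le_mul_right ?_ hlogN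
  calc ‖∑ n ∈ Ioc 0 N, f n‖ * Real.log N
      ≤ C₁ * N * Real.exp (∑ p ∈ N.primesLE, ‖1 + f p‖ / p) := hlog f hf hbound N
    _ = C₁ * N * (Real.exp (∑ p ∈ N.primesLE, 1 / (p : ℝ)) *
          Real.exp (∑ p ∈ N.primesLE, (‖1 + f p‖ - 1) / p)) := by
        rw [← Real.exp_add, ← sum_add_distrib]
        simp only [← add_div, add_sub_cancel]
    _ ≤ C₁ * N * (C₂ * Real.log N *
          Real.exp (∑ p ∈ N.primesLE, (‖1 + f p‖ - 1) / p)) := by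
        gcongr; exact hMertens N hN
    _ = C₁ * C₂ * N * Real.exp (∑ p ∈ N.primesLE, (‖1 + f p‖ - 1) / p) * Real.log N := by ring

lemma isMultiplicative_toArithmeticFunction {R : Type*} [MonoidWithZero R] {g : ℕ → R}
    (hone : g 1 = 1) (hmul : ∀ m n : ℕ, Nat.Coprime m n → g (m * n) = g m * g n) :
    (toArithmeticFunction g).IsMultiplicative := by
  refine IsMultiplicative.iff_ne_zero.2
    ⟨by simpa [toArithmeticFunction] using hone, fun hm hn hmn ↦ ?_⟩
  simpa [toArithmeticFunction, hm, hn] using hmul _ _ hmn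

theorem stmt9_general :
    ∃ C > (0 : ℝ), ∀ x : ℝ, 3 ≤ x → ∀ f : ℕ → 𝕜,
      f 1 = 1 →
      (∀ m n : ℕ, Nat.Coprime m n → f (m * n) = f m * f n) →
      (∀ n : ℕ, 1 ≤ n → ‖f n‖ ≤ 1) →
      ‖∑ n ∈ Icc 1 ⌊x⌋₊, f n‖ ≤
        C * x * Real.exp (∑ p ∈ ⌊x⌋₊.primesLE, (‖1 + f p‖ - 1) / (p : ℝ)) := by
  obtain ⟨C, hC, hsum⟩ := exists_norm_sum_Ioc_le_mul_exp (𝕜 := 𝕜)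
  refine ⟨C + 1, by positivity, fun x hx f hone hmul hbound ↦ ?_⟩
  have hfloor : (⌊x⌋₊ : ℝ) ≤ x := Nat.floor_le (by linarith)
  have heq : ∀ {n : ℕ}, n ≠ 0 → toArithmeticFunction f n = f n := fun hn ↦ if_neg hn
  have hnorm : ∀ n, ‖toArithmeticFunction f n‖ ≤ 1 := fun n ↦ by
    rcases eq_or_ne n 0 with rfl | hn
    · simp
    · simpa [heq hn] using hbound n (Nat.one_le_iff_ne_zero.2 hn)
  have hprimes : ∑ p ∈ ⌊x⌋₊.primesLE, (‖1 + toArithmeticFunction f p‖ - 1) / (p : ℝ) =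
      ∑ p ∈ ⌊x⌋₊.primesLE, (‖1 + f p‖ - 1) / (p : ℝ) :=
    sum_congr rfl fun p hp ↦ by rw [heq (Nat.prime_of_mem_primesLE hp).ne_zero]
  calc ‖∑ n ∈ Icc 1 ⌊x⌋₊, f n‖ = ‖∑ n ∈ Ioc 0 ⌊x⌋₊, toArithmeticFunction f n‖ :=
        congrArg _ (sum_congr rfl fun n hn ↦ (heq (mem_Ioc.1 hn).1.ne').symm)
    _ ≤ C * ⌊x⌋₊ * Real.exp (∑ p ∈ ⌊x⌋₊.primesLE, (‖1 + f p‖ - 1) / (p : ℝ)) := by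
        rw [← hprimes]
        exact hsum _ (isMultiplicative_toArithmeticFunction hone hmul) hnorm _
          (Nat.le_floor (by exact_mod_cast hx))
    _ ≤ (C + 1) * x * Real.exp (∑ p ∈ ⌊x⌋₊.primesLE, (‖1 + f p‖ - 1) / (p : ℝ)) := by
        gcongr; linarith

end MeanValue

theorem stmt9 :
    ∃ C > (0 : ℝ), ∀ x : ℝ, 3 ≤ x → ∀ f : ℕ → ℝ,
      f 1 = 1 →
      (∀ m n : ℕ, Nat.Coprime m n → f (m * n) = f m * f n) →
      (∀ n : ℕ, 1 ≤ n → |f n| ≤ 1) →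
      (∀ n : ℕ, 1 ≤ n → (∃ p : ℕ, p ∈ n.primeFactors ∧ x ^ (0.99 : ℝ) < (p : ℝ)) → f n = 0) →
      |∑ n ∈ Finset.Icc 1 ⌊x⌋₊, f n| ≤
        C * x * Real.exp (∑ p ∈ (Finset.range (⌊x⌋₊ + 1)).filter Nat.Prime, f p / (p : ℝ)) := by
  obtain ⟨C, hC, hsum⟩ := stmt9_general (𝕜 := ℝ)
  refine ⟨C, hC, fun x hx f hone hmul hbound _ ↦ (hsum x hx f hone hmul hbound).trans_eq ?_⟩
  congr 2
  refine sum_congr rfl fun p hp ↦ ?_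
  have hfp := (abs_le.1 (hbound p (mem_filter.1 hp).2.one_le)).1
  rw [Real.norm_of_nonneg (by linarith), add_sub_cancel_left]
end

section
/- There exists a constant y₁ ≥ 2 such that for all y ≥ y₁ and all real x, z > 0, one has Ψ(x + z, y) − Ψ(x, y) ≤ Ψ(z, y) + 1. -/
open Finset
open scoped Classical

/-- `Psi x y` is the number of positive integers `n ≤ x` all of whose prime
factors are at most `y`. -/
noncomputable def Psi (x y : ℝ) : ℕ :=
  ((Finset.Icc 1 ⌊x⌋₊).filter fun n => ∀ p : ℕ, p ∈ n.primeFactors → (p : ℝ) ≤ y).card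

/-!
Write `Q = a + c + 1` with `c ≤ a`; it suffices to prove `Ψ(Q, y) ≤ Ψ(a, y) + Ψ(c, y) + 1` for
natural numbers, by strong induction on `a + c`. If `c < y`, every integer up to `c` is smooth and
the claim is trivial. If `Q < (y + 1)²`, no integer up to `Q` has two prime factors above `y`, so
the number of non-smooth integers up to `N ≤ Q` is `∑ ⌊N / p⌋` over the primes `p > y`, which is
superadditive in `N`.

In the remaining range let `T(n)` be the sum of `log m` over the smooth `m ≤ n`. Then
`T(n) = ∑ Λ(d) Ψ(n / d, y)` over the smooth `d`, and applying the induction hypothesis to every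
`d > 1` gives `T(Q) ≤ T(a) + T(c) + π(y) log Q`. If the claim failed, there would be at least
`Ψ(c, y)` smooth numbers in `(a, Q]`, each contributing at least `log (a + 1)` to `T(Q) - T(a)`,
whereas `T(c)` falls short of `Ψ(c, y) log c` by at least `y log (c / y)`. Together these force
`y log ((a + 1) / y) ≤ π(y) log Q`, which is impossible when `Q ≥ (y + 1)²` since
`π(y) ≤ 3 y / 8` for `y ≥ 72`.
-/

lemma add_add_one_div_le (a c d : ℕ) : (a + c + 1) / d ≤ a / d + c / d + 1 := by
  rcases d.eq_zero_or_pos with rfl | hd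
  · simp
  have ha := Nat.lt_mul_div_succ a hd
  have hc := Nat.lt_mul_div_succ c hd
  rw [← Nat.lt_add_one_iff, Nat.div_lt_iff_lt_mul hd]
  linarith

lemma floor_add_le_floor_add_floor_add_one {R : Type*} [Semiring R] [LinearOrder R]
    [IsStrictOrderedRing R] [FloorSemiring R] (x z : R) : ⌊x + z⌋₊ ≤ ⌊x⌋₊ + ⌊z⌋₊ + 1 := by
  rw [← Nat.lt_add_one_iff, Nat.floor_lt' (Nat.succ_ne_zero _)]
  refine (add_lt_add (Nat.lt_floor_add_one x) (Nat.lt_floor_add_one z)).trans_eq ?_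
  push_cast
  abel

open scoped Nat.Prime in
lemma primeCounting_le_three_eighths_mul {y : ℕ} (hy : 72 ≤ y) : (π y : ℝ) ≤ 3 / 8 * y := by
  obtain ⟨n, rfl⟩ := Nat.exists_eq_add_of_le hy
  have sieve : π (72 + n) ≤ π' 7 + Nat.totient 6 * ((66 + n) / 6 + 1) := by
    rw [Nat.primeCounting, show 72 + n + 1 = 7 + (66 + n) by omega]
    exact Nat.primeCounting'_add_le (by norm_num) (by norm_num) _
  have hφ : Nat.totient 6 = 2 := by decide
  have hπ : π' 7 = 3 := by decide
  rw [hφ, hπ] at sieve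
  have hcast : (8 : ℝ) * π (72 + n) ≤ 3 * (72 + n : ℕ) := by
    have : 8 * π (72 + n) ≤ 3 * (72 + n) := by omega
    exact_mod_cast this
  linarith

section SmoothNumbersUpTo

open scoped ArithmeticFunction.vonMangoldt Nat.Prime

variable {k : ℕ}

lemma smoothNumbersUpTo_subset_smoothNumbersUpTo {m n : ℕ} (h : m ≤ n) :
    m.smoothNumbersUpTo k ⊆ n.smoothNumbersUpTo k := fun _ hi ↦
  have ⟨him, hik⟩ := Nat.mem_smoothNumbersUpTo.mp hi
  Nat.mem_smoothNumbersUpTo.mpr ⟨him.trans h, hik⟩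

lemma pos_of_mem_smoothNumbersUpTo {m n : ℕ} (h : m ∈ n.smoothNumbersUpTo k) : 0 < m :=
  Nat.pos_of_ne_zero (Nat.ne_zero_of_mem_smoothNumbers (Nat.mem_smoothNumbersUpTo.mp h).2)

lemma card_filter_dvd_smoothNumbersUpTo (n : ℕ) {d : ℕ} (hd : d ∈ Nat.smoothNumbers k) :
    #{m ∈ n.smoothNumbersUpTo k | d ∣ m} = #((n / d).smoothNumbersUpTo k) := by
  have hd₀ : 0 < d := Nat.pos_of_ne_zero (Nat.ne_zero_of_mem_smoothNumbers hd)
  have image_eq : {m ∈ n.smoothNumbersUpTo k | d ∣ m} =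
      ((n / d).smoothNumbersUpTo k).image (d * ·) := by
    ext m
    simp only [mem_filter, mem_image, Nat.mem_smoothNumbersUpTo, Nat.le_div_iff_mul_le hd₀,
      mul_comm _ d]
    constructor
    · rintro ⟨⟨hn, hk⟩, e, rfl⟩
      exact ⟨e, ⟨hn, Nat.mem_smoothNumbers_of_dvd hk (dvd_mul_left e d)⟩, rfl⟩
    · rintro ⟨e, ⟨hn, hk⟩, rfl⟩
      exact ⟨⟨hn, Nat.mul_mem_smoothNumbers hd hk⟩, dvd_mul_right d e⟩
  rw [image_eq, card_image_of_injective _ (mul_right_injective₀ hd₀.ne')]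

lemma sum_log_smoothNumbersUpTo {n N : ℕ} (h : n ≤ N) :
    ∑ m ∈ n.smoothNumbersUpTo k, Real.log m =
      ∑ d ∈ N.smoothNumbersUpTo k, Λ d * #((n / d).smoothNumbersUpTo k) := by
  calc ∑ m ∈ n.smoothNumbersUpTo k, Real.log m
      = ∑ m ∈ n.smoothNumbersUpTo k, ∑ d ∈ m.divisors, Λ d := by
        simp only [ArithmeticFunction.vonMangoldt_sum]
    _ = ∑ d ∈ N.smoothNumbersUpTo k, ∑ m ∈ n.smoothNumbersUpTo k with d ∣ m, Λ d := by
        refine sum_comm' fun m d ↦ ?_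
        simp only [Nat.mem_divisors, mem_filter, Nat.mem_smoothNumbersUpTo]
        constructor
        · rintro ⟨⟨hmn, hm⟩, hdm, hm₀⟩
          have hdN : d ≤ N := (Nat.le_of_dvd (Nat.pos_of_ne_zero hm₀) hdm).trans (hmn.trans h)
          exact ⟨⟨⟨hmn, hm⟩, hdm⟩, hdN, Nat.mem_smoothNumbers_of_dvd hm hdm⟩
        · rintro ⟨⟨⟨hmn, hm⟩, hdm⟩, -⟩
          exact ⟨⟨hmn, hm⟩, hdm, Nat.ne_zero_of_mem_smoothNumbers hm⟩
    _ = ∑ d ∈ N.smoothNumbersUpTo k, Λ d * #((n / d).smoothNumbersUpTo k) := by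
        refine sum_congr rfl fun d hd ↦ ?_
        rw [sum_const, card_filter_dvd_smoothNumbersUpTo n (Nat.mem_smoothNumbersUpTo.mp hd).2,
          nsmul_eq_mul, mul_comm]

lemma dvd_prod_primesBelow_pow_log {d n : ℕ} (hd : IsPrimePow d)
    (hdn : d ∈ n.smoothNumbersUpTo k) : d ∣ ∏ p ∈ k.primesBelow, p ^ p.log n := by
  obtain ⟨hdn, hdk⟩ := Nat.mem_smoothNumbersUpTo.mp hdn
  obtain ⟨p, e, hp, he, rfl⟩ := (isPrimePow_nat_iff d).mp hd
  have hpk : p ∈ k.primesBelow :=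
    Nat.mem_primesBelow.mpr ⟨Nat.mem_smoothNumbers'.mp hdk p hp (dvd_pow_self p he.ne'), hp⟩
  exact (pow_dvd_pow p (Nat.le_log_of_pow_le hp.one_lt hdn)).trans
    (dvd_prod_of_mem (fun p ↦ p ^ p.log n) hpk)

lemma sum_vonMangoldt_smoothNumbersUpTo_le (n k : ℕ) :
    ∑ d ∈ n.smoothNumbersUpTo k, Λ d ≤ π' k * Real.log n := by
  set L := ∏ p ∈ k.primesBelow, p ^ p.log n
  have pow_log_pos {p : ℕ} (hp : p ∈ k.primesBelow) : 0 < p ^ p.log n :=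
    pow_pos (Nat.prime_of_mem_primesBelow hp).pos _
  have hL : L ≠ 0 := prod_ne_zero_iff.mpr fun _ hp ↦ (pow_log_pos hp).ne'
  calc ∑ d ∈ n.smoothNumbersUpTo k, Λ d
      = ∑ d ∈ n.smoothNumbersUpTo k with Λ d ≠ 0, Λ d := (sum_filter_ne_zero _).symm
    _ ≤ ∑ d ∈ L.divisors, Λ d := by
        refine sum_le_sum_of_subset_of_nonneg (fun d hd ↦ ?_)
          fun _ _ _ ↦ ArithmeticFunction.vonMangoldt_nonneg
        obtain ⟨hd, hΛ⟩ := mem_filter.mp hd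
        have hd' : IsPrimePow d := ArithmeticFunction.vonMangoldt_ne_zero_iff.mp hΛ
        exact Nat.mem_divisors.mpr ⟨dvd_prod_primesBelow_pow_log hd' hd, hL⟩
    _ = ∑ p ∈ k.primesBelow, Real.log (p ^ p.log n : ℕ) := by
        rw [ArithmeticFunction.vonMangoldt_sum, Nat.cast_prod,
          Real.log_prod fun _ hp ↦ Nat.cast_ne_zero.mpr (pow_log_pos hp).ne']
    _ ≤ ∑ _p ∈ k.primesBelow, Real.log n := by
        refine sum_le_sum fun p hp ↦ ?_
        rcases eq_or_ne n 0 with rfl | hn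
        · simp
        exact Real.log_le_log (Nat.cast_pos.mpr (pow_log_pos hp))
          (Nat.cast_le.mpr (Nat.pow_log_le_self p hn))
    _ = π' k * Real.log n := by
        rw [sum_const, Nat.primesBelow_card_eq_primeCounting', nsmul_eq_mul]

lemma card_roughNumbersUpTo_of_lt_sq {N : ℕ} (h : N < k ^ 2) :
    #(N.roughNumbersUpTo k) = ∑ p ∈ (N + 1).primesBelow \ k.primesBelow, N / p := by
  rw [Nat.roughNumbersUpTo_eq_biUnion, card_biUnion]
  · exact sum_congr rfl fun p _ ↦ Nat.card_multiples' N p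
  intro p hp q hq hpq
  simp only [coe_sdiff, Set.mem_sdiff, mem_coe, Nat.mem_primesBelow, not_and', not_lt] at hp hq
  refine disjoint_left.mpr fun m hm hm' ↦ ?_
  simp only [mem_filter, mem_range] at hm hm'
  have hpqm : p * q ∣ m :=
    ((Nat.coprime_primes hp.1.2 hq.1.2).mpr hpq).mul_dvd_of_dvd_of_dvd hm.2.2 hm'.2.2
  have hpqN : p * q ≤ N :=
    (Nat.le_of_dvd (Nat.pos_of_ne_zero hm.2.1) hpqm).trans (Nat.lt_succ_iff.mp hm.1)
  have hkpq : k * k ≤ p * q := Nat.mul_le_mul (hp.2 hp.1.2) (hq.2 hq.1.2)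
  rw [sq] at h
  omega

lemma card_roughNumbersUpTo_add_le {a b N : ℕ} (hab : a + b ≤ N) (hN : N < k ^ 2) :
    #(a.roughNumbersUpTo k) + #(b.roughNumbersUpTo k) ≤ #(N.roughNumbersUpTo k) := by
  set P := (N + 1).primesBelow \ k.primesBelow
  have card_le {n : ℕ} (hn : n ≤ N) : #(n.roughNumbersUpTo k) ≤ ∑ p ∈ P, n / p := by
    refine (Nat.roughNumbersUpTo_card_le n k).trans (sum_le_sum_of_subset ?_)
    refine sdiff_subset_sdiff (fun p hp ↦ ?_) le_rfl
    rw [Nat.mem_primesBelow] at hp ⊢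
    exact ⟨by omega, hp.2⟩
  calc #(a.roughNumbersUpTo k) + #(b.roughNumbersUpTo k)
      ≤ ∑ p ∈ P, (a / p + b / p) := by
        rw [sum_add_distrib]
        exact add_le_add (card_le (by omega)) (card_le (by omega))
    _ ≤ ∑ p ∈ P, N / p := sum_le_sum fun p _ ↦
        Nat.div_add_div_le_add_div.trans (Nat.div_le_div_right hab)
    _ = #(N.roughNumbersUpTo k) := (card_roughNumbersUpTo_of_lt_sq hN).symm

end SmoothNumbersUpTo

section SmoothCount

/-- The de Bruijn function `Ψ(n, y)` at natural numbers: the number of positive integers up to `n`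
with all prime factors at most `y`. Mathlib's `k`-smooth numbers have all prime factors strictly
below `k`, whence `y + 1`. -/
def smoothCount (n y : ℕ) : ℕ := #(n.smoothNumbersUpTo (y + 1))

/-- The sum of `log m` over the integers `1 ≤ m ≤ n` counted by `smoothCount n y`, the analogue
for smooth numbers of `log n!`. -/
noncomputable def smoothLogSum (n y : ℕ) : ℝ := ∑ m ∈ n.smoothNumbersUpTo (y + 1), Real.log m

open scoped Nat.Prime

variable {y : ℕ}

lemma smoothCount_mono {m n : ℕ} (h : m ≤ n) : smoothCount m y ≤ smoothCount n y :=
  card_le_card (smoothNumbersUpTo_subset_smoothNumbersUpTo h)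

lemma smoothCount_add_card_roughNumbersUpTo (n y : ℕ) :
    smoothCount n y + #(n.roughNumbersUpTo (y + 1)) = n :=
  Nat.smoothNumbersUpTo_card_add_roughNumbersUpTo_card n (y + 1)

lemma smoothCount_of_le {n : ℕ} (h : n ≤ y) : smoothCount n y = n := by
  have rough_eq_empty : n.roughNumbersUpTo (y + 1) = ∅ :=
    filter_eq_empty_iff.mpr fun m hm ⟨hm₀, hmy⟩ ↦ hmy <|
      Nat.mem_smoothNumbers_of_lt (Nat.pos_of_ne_zero hm₀)
        ((mem_range.mp hm).trans_le (Nat.succ_le_succ h))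
  simpa only [rough_eq_empty, card_empty, add_zero] using smoothCount_add_card_roughNumbersUpTo n y

lemma smoothCount_add_le (m n y : ℕ) : smoothCount (m + n) y ≤ smoothCount m y + n := by
  have hm := smoothCount_add_card_roughNumbersUpTo m y
  have hmn := smoothCount_add_card_roughNumbersUpTo (m + n) y
  have rough_le : #(m.roughNumbersUpTo (y + 1)) ≤ #((m + n).roughNumbersUpTo (y + 1)) :=
    card_le_card (filter_subset_filter _ (range_subset_range.mpr (by omega)))
  omega

lemma smoothCount_add_add_one_le_of_lt_sq {a c : ℕ} (h : a + c + 1 < (y + 1) ^ 2) :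
    smoothCount (a + c + 1) y ≤ smoothCount a y + smoothCount c y + 1 := by
  have ha := smoothCount_add_card_roughNumbersUpTo a y
  have hc := smoothCount_add_card_roughNumbersUpTo c y
  have hQ := smoothCount_add_card_roughNumbersUpTo (a + c + 1) y
  have rough_le := card_roughNumbersUpTo_add_le ((a + c).le_add_right 1) h
  omega

lemma smoothLogSum_le_of_smoothCount_div_le {a c N : ℕ} (ha : a ≤ N) (hc : c ≤ N)
    (h : ∀ d, 1 < d →
      smoothCount (N / d) y ≤ smoothCount (a / d) y + smoothCount (c / d) y + 1) :
    smoothLogSum N y ≤ smoothLogSum a y + smoothLogSum c y + π y * Real.log N := by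
  simp only [smoothLogSum, sum_log_smoothNumbersUpTo ha, sum_log_smoothNumbersUpTo hc,
    sum_log_smoothNumbersUpTo le_rfl]
  refine le_trans ?_ (add_le_add_right (sum_vonMangoldt_smoothNumbersUpTo_le N (y + 1)) _)
  simp only [← sum_add_distrib]
  refine sum_le_sum fun d hd ↦ ?_
  rcases (Nat.succ_le_of_lt (pos_of_mem_smoothNumbersUpTo hd)).eq_or_lt with rfl | hd₁
  · simp
  rw [← mul_add, ← mul_add_one]
  exact mul_le_mul_of_nonneg_left (by exact_mod_cast h d hd₁)
    ArithmeticFunction.vonMangoldt_nonneg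

lemma smoothLogSum_le {n : ℕ} (h : y ≤ n) :
    smoothLogSum n y ≤ smoothCount n y * Real.log n - y * (Real.log n - Real.log y) := by
  have log_le {m N : ℕ} (hm : m ∈ N.smoothNumbersUpTo (y + 1)) : Real.log m ≤ Real.log N :=
    Real.log_le_log (Nat.cast_pos.mpr (pos_of_mem_smoothNumbersUpTo hm))
      (Nat.cast_le.mpr (Nat.mem_smoothNumbersUpTo.mp hm).1)
  have deficit :=
    calc y * (Real.log n - Real.log y)
        = #(y.smoothNumbersUpTo (y + 1)) • (Real.log n - Real.log y) := by
          rw [nsmul_eq_mul, show #(y.smoothNumbersUpTo (y + 1)) = y from smoothCount_of_le le_rfl]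
      _ ≤ ∑ m ∈ y.smoothNumbersUpTo (y + 1), (Real.log n - Real.log m) :=
          card_nsmul_le_sum _ _ _ fun m hm ↦ sub_le_sub_left (log_le hm) _
      _ ≤ ∑ m ∈ n.smoothNumbersUpTo (y + 1), (Real.log n - Real.log m) :=
          sum_le_sum_of_subset_of_nonneg (smoothNumbersUpTo_subset_smoothNumbersUpTo h)
            fun m hm _ ↦ sub_nonneg.mpr (log_le hm)
      _ = smoothCount n y * Real.log n - smoothLogSum n y := by
          rw [sum_sub_distrib, sum_const, nsmul_eq_mul, smoothCount, smoothLogSum]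
  linarith

lemma smoothCount_sub_mul_log_le {a b : ℕ} (h : a ≤ b) :
    ((smoothCount b y : ℝ) - smoothCount a y) * Real.log (a + 1) ≤
      smoothLogSum b y - smoothLogSum a y := by
  set new := b.smoothNumbersUpTo (y + 1) \ a.smoothNumbersUpTo (y + 1)
  have hsub := smoothNumbersUpTo_subset_smoothNumbersUpTo (k := y + 1) h
  calc ((smoothCount b y : ℝ) - smoothCount a y) * Real.log (a + 1)
      = #new • Real.log (a + 1) := by
        rw [nsmul_eq_mul, cast_card_sdiff hsub, smoothCount, smoothCount]
    _ ≤ ∑ m ∈ new, Real.log m := by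
        refine card_nsmul_le_sum _ _ _ fun m hm ↦ Real.log_le_log (by positivity) ?_
        simp only [new, mem_sdiff, Nat.mem_smoothNumbersUpTo, not_and', not_le] at hm
        exact_mod_cast hm.2 hm.1.2
    _ = smoothLogSum b y - smoothLogSum a y := sum_sdiff_eq_sub hsub

lemma mul_log_sub_log_le_of_smoothCount_add_le {a c N : ℕ} (hy : 0 < y) (hyc : y ≤ c)
    (hca : c ≤ a) (haN : a ≤ N) (hcount : smoothCount a y + smoothCount c y ≤ smoothCount N y)
    (hdiv : ∀ d, 1 < d →
      smoothCount (N / d) y ≤ smoothCount (a / d) y + smoothCount (c / d) y + 1) :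
    y * (Real.log (a + 1) - Real.log y) ≤ π y * Real.log N := by
  have hlog : Real.log c ≤ Real.log (a + 1) :=
    Real.log_le_log (by exact_mod_cast hy.trans_le hyc) (by exact_mod_cast hca.trans a.le_succ)
  have hlog₀ : 0 ≤ Real.log (a + 1) := Real.log_nonneg (by simp)
  have upper := smoothLogSum_le_of_smoothCount_div_le haN (hca.trans haN) hdiv
  have lower : smoothCount c y * Real.log (a + 1) ≤ smoothLogSum N y - smoothLogSum a y := by
    have hcount' : (smoothCount c y : ℝ) ≤ smoothCount N y - smoothCount a y := by
      rw [le_sub_iff_add_le']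
      exact_mod_cast hcount
    exact (mul_le_mul_of_nonneg_right hcount' hlog₀).trans (smoothCount_sub_mul_log_le haN)
  have deficit := smoothLogSum_le hyc
  have y_le : (y : ℝ) ≤ smoothCount c y := by
    exact_mod_cast (smoothCount_of_le le_rfl).ge.trans (smoothCount_mono hyc)
  have deficit_le := mul_le_mul_of_nonneg_right y_le (sub_nonneg.mpr hlog)
  linarith

/-- If `π(y) ≤ θ y`, the comparison needs `log 2 < (1 - 2 θ) log y`; for `θ = 3 / 8` this is
`2 ^ 4 < y`. -/
lemma primeCounting_mul_log_lt {a N : ℕ} (hy : 72 ≤ y) (hyN : y ^ 2 ≤ N) (hN : N ≤ 2 * (a + 1)) :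
    π y * Real.log N < y * (Real.log (a + 1) - Real.log y) := by
  have hy' : (72 : ℝ) ≤ y := by exact_mod_cast hy
  have hy₀ : (0 : ℝ) < y := by linarith
  have hN₀ : (0 : ℝ) < N := (pow_pos hy₀ 2).trans_le (by exact_mod_cast hyN)
  have logN_le : Real.log N ≤ Real.log 2 + Real.log (a + 1) := by
    rw [← Real.log_mul two_ne_zero (by positivity)]
    exact Real.log_le_log hN₀ (by exact_mod_cast hN)
  have two_logy_le : 2 * Real.log y ≤ Real.log N := by
    rw [← Nat.cast_ofNat, ← Real.log_pow]
    exact Real.log_le_log (by positivity) (by exact_mod_cast hyN)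
  have logy_gt : 4 * Real.log 2 < Real.log y := by
    rw [← Nat.cast_ofNat, ← Real.log_pow]
    exact Real.log_lt_log (by norm_num) (by norm_num; linarith)
  calc π y * Real.log N
      ≤ 3 / 8 * y * Real.log N :=
        mul_le_mul_of_nonneg_right (primeCounting_le_three_eighths_mul hy)
          (Real.log_natCast_nonneg N)
    _ = y * (3 / 8 * Real.log N) := by ring
    _ < y * (Real.log (a + 1) - Real.log y) :=
        mul_lt_mul_of_pos_left (by linarith) hy₀

theorem smoothCount_add_add_one_le (hy : 72 ≤ y) (a c : ℕ) :
    smoothCount (a + c + 1) y ≤ smoothCount a y + smoothCount c y + 1 := by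
  induction hs : a + c using Nat.strong_induction_on generalizing a c with
  | _ s ih =>
  subst hs
  wlog hca : c ≤ a generalizing a c
  · simpa only [add_comm c a, add_comm (smoothCount c y)] using
      this c a (by simpa only [add_comm c a] using ih) (le_of_not_ge hca)
  rcases lt_or_ge c y with hcy | hyc
  · rw [smoothCount_of_le hcy.le]
    exact smoothCount_add_le a (c + 1) y
  rcases lt_or_ge (a + c + 1) ((y + 1) ^ 2) with hsmall | hlarge
  · exact smoothCount_add_add_one_le_of_lt_sq hsmall
  by_contra! hcon
  have hdiv (d : ℕ) (hd : 1 < d) : smoothCount ((a + c + 1) / d) y ≤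
      smoothCount (a / d) y + smoothCount (c / d) y + 1 := by
    have ha : a / d < a := Nat.div_lt_self (by omega) hd
    have hc : c / d ≤ c := Nat.div_le_self c d
    exact (smoothCount_mono (add_add_one_div_le a c d)).trans
      (ih (a / d + c / d) (by omega) (a / d) (c / d) rfl)
  refine (primeCounting_mul_log_lt hy ?_ (by omega)).not_ge <|
    mul_log_sub_log_le_of_smoothCount_add_le (by omega) hyc hca (by omega) (by omega) hdiv
  exact (Nat.pow_le_pow_left y.le_succ 2).trans hlarge

end SmoothCount

lemma Psi_eq_smoothCount (x : ℝ) {y : ℝ} (hy : 0 ≤ y) : Psi x y = smoothCount ⌊x⌋₊ ⌊y⌋₊ := by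
  unfold Psi smoothCount
  congr 1
  ext n
  simp only [mem_filter, mem_Icc, Nat.mem_smoothNumbersUpTo, Nat.mem_smoothNumbers,
    Nat.mem_primeFactors_iff_mem_primeFactorsList, Nat.lt_succ_iff, Nat.le_floor_iff hy,
    Nat.one_le_iff_ne_zero]
  tauto

theorem stmt12_general {y : ℝ} (hy : 72 ≤ y) (x z : ℝ) :
    Psi (x + z) y ≤ Psi x y + Psi z y + 1 := by
  have hy₀ : 0 ≤ y := by linarith
  simp only [Psi_eq_smoothCount _ hy₀]
  exact (smoothCount_mono (floor_add_le_floor_add_floor_add_one x z)).trans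
    (smoothCount_add_add_one_le (Nat.le_floor hy) _ _)

theorem stmt12 :
    ∃ y₁ : ℝ, 2 ≤ y₁ ∧ ∀ y : ℝ, y₁ ≤ y → ∀ x z : ℝ, 0 < x → 0 < z →
      (Psi (x + z) y : ℝ) - (Psi x y : ℝ) ≤ (Psi z y : ℝ) + 1 := by
  refine ⟨72, by norm_num, fun y hy x z _ _ ↦ ?_⟩
  rw [sub_le_iff_le_add', ← add_assoc]
  exact_mod_cast stmt12_general hy x z
end
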